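/- arXiv:2506.15611 — 3 statements merged into one kernel-verified Lean document; each statement's English description precedes it below -/
import Mathlib

section
/- Let n > 2 and let f = f(r,θ) ∈ C²((0,∞) × S^{d-1}) be a positive function satisfying 𝓛f ≤ 0 on (0,∞) × S^{d-1}. Then there exist positive constants ρ, A > 0 such that f(r,θ) ≥ A r^{2-n} for all (r,θ) ∈ (ρ,∞) × S^{d-1}. -/
/-!
The bound holds with `ρ = 1` and `A = m`, the minimum of `f` on the unit sphere. The function
`r^(2-n)` is only `𝓛`-harmonic, while for `s > n - 2` the function `r^(-s)` is a strict subsolution,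
`𝓛 r^(-s) = α² s (s + 2 - n) r^(-s-2) > 0` (`cylL_norm_rpow`). Hence `f - m r^(-s)` has no interior
minimum on an annulus `1 ≤ r ≤ R`: at such a point the gradient vanishes and the Hessian is positive
semidefinite, so `𝓛` of the function is nonnegative (`cylL_nonneg_of_isLocalMin`), contradicting
`𝓛f ≤ 0`. Looking at the two boundary spheres gives `f ≥ m (r^(-s) - R^(-s))`
(`annulus_comparison`); it remains to let `R → ∞` and then `s ↓ n - 2`.

Writing `H` for the Hessian and `ν = x / ‖x‖`, both derivatives in `v''` are accounted for by
`v'' = H(ν, ν)`, since `ν` is constant along rays. So `𝓛` is an explicit expression in the Hessian and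
the gradient (`cylL_eq_hess`), in which `Δ_θ / r²` has second-order part `tr H - H(ν, ν)`.
-/

open Real MeasureTheory Metric
open scoped RealInnerProductSpace

noncomputable section

/-- `ℝ^d` with the Euclidean structure. -/
abbrev Euc (d : ℕ) := EuclideanSpace ℝ (Fin d)

/-- Divergence of a vector field on `ℝ^d`. -/
def divg {d : ℕ} (F : Euc d → Euc d) (x : Euc d) : ℝ :=
  ∑ i, ⟪fderiv ℝ F x (EuclideanSpace.single i 1), EuclideanSpace.single i 1⟫

/-- The critical parameter `a_c = (d-2)/2`. -/
def acrit (d : ℕ) : ℝ := ((d : ℝ) - 2) / 2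

/-- The CKN exponent `p = 2d/(d-2+2(b-a))`. -/
def pCKN (d : ℕ) (a b : ℝ) : ℝ := 2 * d / ((d : ℝ) - 2 + 2 * (b - a))

/-- The auxiliary parameter `α = (1+a-b)(a_c-a)/(a_c-a+b)`. -/
def alphaCKN (d : ℕ) (a b : ℝ) : ℝ := (1 + a - b) * (acrit d - a) / (acrit d - a + b)

/-- The intrinsic dimension `n = d/(1+a-b)`. -/
def nCKN (d : ℕ) (a b : ℝ) : ℝ := (d : ℝ) / (1 + a - b)

/-- The admissibility conditions on `a, b`:
`a ≤ b ≤ a+1` if `d ≥ 3`, `a < b ≤ a+1` if `d = 2`, and `a < a_c`. -/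
def Admissible (d : ℕ) (a b : ℝ) : Prop :=
  ((3 ≤ d ∧ a ≤ b ∧ b ≤ a + 1) ∨ (d = 2 ∧ a < b ∧ b ≤ a + 1)) ∧ a < acrit d

/-- `p ∈ (2, 2^*)` where `2^* = 2d/(d-2)` for `d ≥ 3` (and `2^* = +∞` for `d = 2`). -/
def PInCriticalRange (d : ℕ) (p : ℝ) : Prop :=
  2 < p ∧ (3 ≤ d → p < 2 * d / ((d : ℝ) - 2))

/-- `u` is a (classical, away from the origin) solution of
`div(|x|^{-2a} ∇u) + |x|^{-bp} u^{p-1} = 0` in `ℝ^d`. -/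
def IsCKNSolution (d : ℕ) (a b p : ℝ) (u : Euc d → ℝ) : Prop :=
  ContDiffOn ℝ (⊤ : ℕ∞) u {(0 : Euc d)}ᶜ ∧
    ∀ x : Euc d, x ≠ 0 →
      divg (fun y => (‖y‖ ^ (-(2 * a)) : ℝ) • gradient u y) x
        + ‖x‖ ^ (-(b * p)) * u x ^ (p - 1) = 0

/-- The explicit radial solution `𝒰`. -/
def UCKN (d : ℕ) (a b : ℝ) (x : Euc d) : ℝ :=
  ((d : ℝ) * (pCKN d a b - 2) * (acrit d - a) ^ 2 / (1 + a - b)) ^ (1 / (pCKN d a b - 2)) *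
    (1 + ‖x‖ ^ ((pCKN d a b - 2) * (acrit d - a))) ^ (-2 / (pCKN d a b - 2))

/-- `u` coincides with `𝒰` up to the scaling invariance `u ↦ λ^{a_c-a} u(λ ·)`. -/
def IsSolitonBubble (d : ℕ) (a b : ℝ) (u : Euc d → ℝ) : Prop :=
  ∃ lam : ℝ, 0 < lam ∧ ∀ x : Euc d, u x = lam ^ (acrit d - a) * UCKN d a b (lam • x)

/-- Membership in the local space `D^{a,b}_loc(ℝ^d)`. -/
def MemDLoc (d : ℕ) (a b p : ℝ) (u : Euc d → ℝ) : Prop :=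
  ∀ R : ℝ, 0 < R →
    IntegrableOn (fun x : Euc d => |u x| ^ p * ‖x‖ ^ (-(b * p))) (ball 0 R) volume ∧
      IntegrableOn (fun x : Euc d => ‖x‖ ^ (-(2 * a)) * ‖gradient u x‖ ^ 2) (ball 0 R) volume

/-- Membership in the energy space `D^{a,b}(ℝ^d)`. -/
def MemD (d : ℕ) (a b p : ℝ) (u : Euc d → ℝ) : Prop :=
  Integrable (fun x : Euc d => |u x| ^ p * ‖x‖ ^ (-(b * p))) volume ∧
    Integrable (fun x : Euc d => ‖x‖ ^ (-(2 * a)) * ‖gradient u x‖ ^ 2) volume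

/- Cylinder `(0,∞) × S^{d-1}` objects.  A function on the cylinder is identified with a
function on `ℝ^d \ {0}` via `(r,θ) ↦ rθ`; the angular derivatives are expressed through
the standard Euclidean decomposition in spherical coordinates. -/

/-- Radial derivative `v'` (i.e. `∂_r`) in spherical coordinates. -/
def rD {d : ℕ} (V : Euc d → ℝ) (x : Euc d) : ℝ := fderiv ℝ V x (‖x‖⁻¹ • x)

/-- Second radial derivative `v''`. -/
def rD2 {d : ℕ} (V : Euc d → ℝ) (x : Euc d) : ℝ := rD (rD V) x

/-- The Euclidean Laplacian on `ℝ^d`. -/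
def eLap {d : ℕ} (V : Euc d → ℝ) (x : Euc d) : ℝ :=
  ∑ i, fderiv ℝ (fun y => fderiv ℝ V y (EuclideanSpace.single i 1)) x (EuclideanSpace.single i 1)

/-- `Δ_θ V / r²`, via the decomposition `Δ = ∂_rr + (d-1)/r ∂_r + Δ_θ/r²`. -/
def sphLapR2 {d : ℕ} (V : Euc d → ℝ) (x : Euc d) : ℝ :=
  eLap V x - rD2 V x - ((d : ℝ) - 1) / ‖x‖ * rD V x

/-- The operator `𝓛v = α² v'' + α²(n-1) v'/r + Δ_θ v/r²`. -/
def cylL {d : ℕ} (α n : ℝ) (V : Euc d → ℝ) (x : Euc d) : ℝ :=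
  α ^ 2 * rD2 V x + α ^ 2 * (n - 1) / ‖x‖ * rD V x + sphLapR2 V x

/-- `∇_θ V / r`, realized as the tangential part of the Euclidean gradient. -/
def tGrad {d : ℕ} (V : Euc d → ℝ) (x : Euc d) : Euc d :=
  gradient V x - rD V x • (‖x‖⁻¹ • x)

/-- `|Dv|² = α² |v'|² + |∇_θ v|²/r²`. -/
def cylGradSq {d : ℕ} (α : ℝ) (V : Euc d → ℝ) (x : Euc d) : ℝ :=
  α ^ 2 * rD V x ^ 2 + ‖tGrad V x‖ ^ 2

/-- `⟨Dv, Dq⟩ = α² v' q' + ∇_θ v · ∇_θ q / r²`. -/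
def cylInnerD {d : ℕ} (α : ℝ) (V Q : Euc d → ℝ) (x : Euc d) : ℝ :=
  α ^ 2 * rD V x * rD Q x + ⟪tGrad V x, tGrad Q x⟫

/-- The Bochner quantity `𝐤[𝐩] = ½ 𝓛|D𝐩|² − ⟨D𝐩, D𝓛𝐩⟩ − (1/n)(𝓛𝐩)²`. -/
def bochK {d : ℕ} (α n : ℝ) (V : Euc d → ℝ) (x : Euc d) : ℝ :=
  (1 / 2) * cylL α n (cylGradSq α V) x - cylInnerD α V (cylL α n V) x
    - (1 / n) * cylL α n V x ^ 2

/-- The divergence `D_i (φ D_i ψ)` of the field `φ Dψ`, expressed via the Leibniz rule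
`D_i(φ D_i ψ) = ⟨Dφ, Dψ⟩ + φ 𝓛ψ`. -/
def cylDivFD {d : ℕ} (α n : ℝ) (φ ψ : Euc d → ℝ) (x : Euc d) : ℝ :=
  cylInnerD α φ ψ x + φ x * cylL α n ψ x

/-- Integral over the cylinder `(0,∞)×S^{d-1}` with respect to `dμ = r^{n-1} dr dθ`,
i.e. the weighted integral `∫ f(x) |x|^{n-d} dx` on `ℝ^d`. -/
def cylIntegral {d : ℕ} (n : ℝ) (f : Euc d → ℝ) : ℝ :=
  ∫ x : Euc d, f x * ‖x‖ ^ (n - (d : ℝ))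

/-- Integral over `(0,R)×S^{d-1}` with respect to `dμ = r^{n-1} dr dθ`. -/
def cylIntegralBall {d : ℕ} (n : ℝ) (R : ℝ) (f : Euc d → ℝ) : ℝ :=
  ∫ x in ball (0 : Euc d) R, f x * ‖x‖ ^ (n - (d : ℝ))

/-- `W` is the cylinder representation `w` of `u`, i.e. `u(r,θ) = w(r^α, θ)`. -/
def IsCylinderRep {d : ℕ} (α : ℝ) (u W : Euc d → ℝ) : Prop :=
  ContDiffOn ℝ (⊤ : ℕ∞) W {(0 : Euc d)}ᶜ ∧
    ∀ x : Euc d, x ≠ 0 → u x = W ((‖x‖ ^ (α - 1) : ℝ) • x)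

/-- The pressure function `𝐩 = (n-1) w^{-2/(n-2)}`. -/
def pressure {d : ℕ} (n : ℝ) (W : Euc d → ℝ) (x : Euc d) : ℝ :=
  (n - 1) * W x ^ (-(2 / (n - 2)))

/-- A nonnegative smooth function of the radial variable, compactly supported in `(0,∞)`. -/
def IsCutoff (η : ℝ → ℝ) : Prop :=
  ContDiff ℝ (⊤ : ℕ∞) η ∧ HasCompactSupport η ∧ tsupport η ⊆ Set.Ioi 0 ∧ ∀ r : ℝ, 0 ≤ η r

/-! ### The operator in terms of the Hessian -/

/-- The Hessian of `V` at `x`, as a bilinear form. -/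
def hess {d : ℕ} (V : Euc d → ℝ) (x v w : Euc d) : ℝ := fderiv ℝ (fderiv ℝ V) x v w

theorem differentiableAt_fderiv_of_contDiffAt {d : ℕ} {V : Euc d → ℝ} {x : Euc d}
    (hV : ContDiffAt ℝ 2 V x) : DifferentiableAt ℝ (fderiv ℝ V) x :=
  (hV.fderiv_right (m := 1) (by norm_num)).differentiableAt (by norm_num)

theorem fderiv_fderiv_apply {d : ℕ} {V : Euc d → ℝ} {x : Euc d}
    (hV : ContDiffAt ℝ 2 V x) (v w : Euc d) :
    fderiv ℝ (fun y => fderiv ℝ V y w) x v = hess V x v w := by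
  have h := (differentiableAt_fderiv_of_contDiffAt hV).hasFDerivAt.clm_apply (hasFDerivAt_const w x)
  rw [h.fderiv]
  simp [hess]

theorem hasFDerivAt_norm_rpow_of_ne {d : ℕ} (p : ℝ) {x : Euc d} (hx : x ≠ 0) :
    HasFDerivAt (fun y : Euc d => ‖y‖ ^ p) ((p * ‖x‖ ^ (p - 2)) • innerSL ℝ x) x := by
  have hpos : 0 < ‖x‖ := norm_pos_iff.mpr hx
  have h1 := (hasStrictFDerivAt_norm_sq x).hasFDerivAt.rpow_const (p := p / 2)
    (Or.inl (by positivity))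
  have key : ∀ (y : Euc d) (q : ℝ), (‖y‖ ^ 2) ^ q = ‖y‖ ^ (2 * q) := fun y q => by
    rw [← Real.rpow_natCast, ← Real.rpow_mul (norm_nonneg _)]; norm_num
  simp only [key] at h1
  have e : (p / 2 * ‖x‖ ^ (2 * (p / 2 - 1))) • (2 • innerSL ℝ x : Euc d →L[ℝ] ℝ) =
      (p * ‖x‖ ^ (p - 2)) • innerSL ℝ x := by
    rw [show 2 * (p / 2 - 1) = p - 2 by ring, ← Nat.cast_smul_eq_nsmul ℝ, smul_smul]
    congr 1
    push_cast
    ring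
  rw [show 2 * (p / 2) = p by ring] at h1
  exact e ▸ h1

/-- The unit radial field is constant along rays, so its radial derivative vanishes. -/
theorem hasFDerivAt_unit {d : ℕ} {x : Euc d} (hx : x ≠ 0) :
    ∃ L : Euc d →L[ℝ] Euc d, HasFDerivAt (fun y : Euc d => ‖y‖⁻¹ • y) L x ∧
      L (‖x‖⁻¹ • x) = 0 := by
  have hpos : 0 < ‖x‖ := norm_pos_iff.mpr hx
  have h := (hasFDerivAt_norm_rpow_of_ne (-1) hx).fun_smul (hasFDerivAt_id x)
  simp only [Real.rpow_neg_one, id] at h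
  refine ⟨_, h, ?_⟩
  have e : ‖x‖ ^ (-1 - 2 : ℝ) = (‖x‖ ^ 3)⁻¹ := by
    rw [show (-1 - 2 : ℝ) = -((3 : ℕ) : ℝ) by norm_num, Real.rpow_neg hpos.le, Real.rpow_natCast]
  simp only [_root_.add_apply, _root_.smul_apply,
    ContinuousLinearMap.smulRight_apply, innerSL_apply_apply, inner_smul_right,
    real_inner_self_eq_norm_sq, ContinuousLinearMap.id_apply, smul_smul, ← add_smul, e, smul_eq_mul]
  convert zero_smul ℝ x using 2
  field_simp
  ring

theorem rD2_eq_hess {d : ℕ} {V : Euc d → ℝ} {x : Euc d} (hx : x ≠ 0)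
    (hV : ContDiffAt ℝ 2 V x) : rD2 V x = hess V x (‖x‖⁻¹ • x) (‖x‖⁻¹ • x) := by
  obtain ⟨L, hL, hL0⟩ := hasFDerivAt_unit hx
  have h := (differentiableAt_fderiv_of_contDiffAt hV).hasFDerivAt.clm_apply hL
  have h' : fderiv ℝ (rD V) x = _ := h.fderiv
  rw [rD2, rD, h']
  simp only [_root_.add_apply, ContinuousLinearMap.comp_apply, hL0, map_zero, zero_add,
    ContinuousLinearMap.flip_apply, hess]

theorem cylL_eq_hess {d : ℕ} (α n : ℝ) {V : Euc d → ℝ} {x : Euc d} (hx : x ≠ 0)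
    (hV : ContDiffAt ℝ 2 V x) :
    cylL α n V x = α ^ 2 * hess V x (‖x‖⁻¹ • x) (‖x‖⁻¹ • x)
      + α ^ 2 * (n - 1) / ‖x‖ * fderiv ℝ V x (‖x‖⁻¹ • x)
      + (∑ i, hess V x (EuclideanSpace.single i 1) (EuclideanSpace.single i 1)
        - hess V x (‖x‖⁻¹ • x) (‖x‖⁻¹ • x)
        - ((d : ℝ) - 1) / ‖x‖ * fderiv ℝ V x (‖x‖⁻¹ • x)) := by
  simp only [cylL, sphLapR2, rD2_eq_hess hx hV, eLap, fderiv_fderiv_apply hV, rD]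

/-! ### Powers of the radius -/

theorem contDiffAt_norm_rpow {d : ℕ} (p : ℝ) {x : Euc d} (hx : x ≠ 0) :
    ContDiffAt ℝ 2 (fun y : Euc d => ‖y‖ ^ p) x :=
  (contDiffAt_norm ℝ hx).rpow_const_of_ne (norm_ne_zero_iff.mpr hx)

theorem hess_norm_rpow {d : ℕ} (p : ℝ) {x : Euc d} (hx : x ≠ 0) (v w : Euc d) :
    hess (fun y : Euc d => ‖y‖ ^ p) x v w =
      p * (p - 2) * ‖x‖ ^ (p - 4) * ⟪x, v⟫ * ⟪x, w⟫ + p * ‖x‖ ^ (p - 2) * ⟪v, w⟫ := by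
  rw [← fderiv_fderiv_apply (contDiffAt_norm_rpow p hx)]
  have hev : (fun y : Euc d => fderiv ℝ (fun y : Euc d => ‖y‖ ^ p) y w) =ᶠ[nhds x]
      fun y => p * ‖y‖ ^ (p - 2) * ⟪y, w⟫ := by
    filter_upwards [isOpen_ne.mem_nhds hx] with y hy
    rw [(hasFDerivAt_norm_rpow_of_ne p hy).fderiv]
    simp
  rw [hev.fderiv_eq]
  have h := ((hasFDerivAt_norm_rpow_of_ne (p - 2) hx).const_mul p).mul
    ((hasFDerivAt_id x).inner ℝ (hasFDerivAt_const w x))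
  have h' : fderiv ℝ (fun y : Euc d => p * ‖y‖ ^ (p - 2) * ⟪y, w⟫) x = _ := h.fderiv
  rw [h', show p - 4 = p - 2 - 2 by ring]
  simp
  ring

/-- Powers of the radius satisfy `𝓛 r^p = α² p (p + n - 2) r^(p-2)`. -/
theorem cylL_norm_rpow {d : ℕ} (α n p : ℝ) {x : Euc d} (hx : x ≠ 0) :
    cylL α n (fun y : Euc d => ‖y‖ ^ p) x = α ^ 2 * p * (p + n - 2) * ‖x‖ ^ (p - 2) := by
  have hpos : 0 < ‖x‖ := norm_pos_iff.mpr hx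
  rw [cylL_eq_hess α n hx (contDiffAt_norm_rpow p hx), (hasFDerivAt_norm_rpow_of_ne p hx).fderiv]
  simp only [hess_norm_rpow p hx]
  have e4 : ‖x‖ ^ (p - 4) = ‖x‖ ^ (p - 2) / ‖x‖ ^ 2 := by
    rw [← Real.rpow_natCast, ← Real.rpow_sub hpos]; congr 1; push_cast; ring
  have hs : ∑ i, x i * x i = ‖x‖ ^ 2 := by
    rw [EuclideanSpace.real_norm_sq_eq]; exact Finset.sum_congr rfl fun i _ => (sq _).symm
  simp only [EuclideanSpace.inner_single_right, inner_smul_right, real_inner_smul_left,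
    real_inner_self_eq_norm_sq, Finset.sum_add_distrib, mul_assoc, ← Finset.mul_sum,
    _root_.smul_apply, innerSL_apply_apply, smul_eq_mul, e4]
  simp [hs]
  field_simp
  ring

/-! ### Linearity -/

theorem hess_sub {d : ℕ} {V W : Euc d → ℝ} {x : Euc d} (hV : ContDiffAt ℝ 2 V x)
    (hW : ContDiffAt ℝ 2 W x) (v w : Euc d) :
    hess (fun y => V y - W y) x v w = hess V x v w - hess W x v w := by
  have hev : fderiv ℝ (fun y => V y - W y) =ᶠ[nhds x] fun y => fderiv ℝ V y - fderiv ℝ W y := by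
    filter_upwards [hV.eventually (by simp), hW.eventually (by simp)] with y h1 h2
    exact fderiv_fun_sub (h1.differentiableAt (by simp)) (h2.differentiableAt (by simp))
  rw [hess, hev.fderiv_eq, fderiv_fun_sub (differentiableAt_fderiv_of_contDiffAt hV)
    (differentiableAt_fderiv_of_contDiffAt hW)]
  rfl

theorem cylL_sub {d : ℕ} (α n : ℝ) {V W : Euc d → ℝ} {x : Euc d} (hx : x ≠ 0)
    (hV : ContDiffAt ℝ 2 V x) (hW : ContDiffAt ℝ 2 W x) :
    cylL α n (fun y => V y - W y) x = cylL α n V x - cylL α n W x := by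
  rw [cylL_eq_hess α n hx hV, cylL_eq_hess α n hx hW, cylL_eq_hess α n hx (hV.sub hW),
    fderiv_fun_sub (hV.differentiableAt (by simp)) (hW.differentiableAt (by simp))]
  simp only [hess_sub hV hW, Finset.sum_sub_distrib, _root_.sub_apply]
  ring

theorem cylL_const_mul {d : ℕ} (α n c : ℝ) {V : Euc d → ℝ} {x : Euc d} (hx : x ≠ 0)
    (hV : ContDiffAt ℝ 2 V x) :
    cylL α n (fun y => c * V y) x = c * cylL α n V x := by
  have hh : ∀ v w, hess (fun y => c * V y) x v w = c * hess V x v w := fun v w => by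
    have hev : fderiv ℝ (fun y => c * V y) =ᶠ[nhds x] fun y => c • fderiv ℝ V y := by
      filter_upwards [hV.eventually (by simp)] with y h1
      exact fderiv_const_mul (h1.differentiableAt (by simp)) c
    rw [hess, hev.fderiv_eq, fderiv_fun_const_smul (differentiableAt_fderiv_of_contDiffAt hV)]
    rfl
  rw [cylL_eq_hess α n hx hV, cylL_eq_hess α n hx (contDiffAt_const.mul hV),
    fderiv_const_mul (hV.differentiableAt (by simp))]
  simp only [hh, ← Finset.mul_sum, _root_.smul_apply, smul_eq_mul]
  ring

/-! ### Local minima -/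

/-- Second-order necessary condition at a local minimum, in one variable. -/
theorem deriv_deriv_nonneg_of_isLocalMin {g : ℝ → ℝ} {t : ℝ} (hg : ContinuousAt g t)
    (h : IsLocalMin g t) : 0 ≤ deriv (deriv g) t := by
  by_contra! hneg
  -- The sufficient condition makes `t` a local maximum too, so `g` is locally constant.
  have hmax : IsLocalMax g t := isLocalMax_of_deriv_deriv_neg hneg h.deriv_eq_zero hg
  have hc : g =ᶠ[nhds t] fun _ => g t := by
    filter_upwards [h, hmax] with s h1 h2 using le_antisymm h2 h1
  have := hc.deriv.deriv_eq
  simp at this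
  linarith

theorem hess_nonneg_of_isLocalMin {d : ℕ} {V : Euc d → ℝ} {x : Euc d}
    (hV : ContDiffAt ℝ 2 V x) (h : IsLocalMin V x) (v : Euc d) : 0 ≤ hess V x v v := by
  have hl : ∀ t : ℝ, HasDerivAt (fun t : ℝ => x + t • v) v t := fun t => by
    simpa using ((hasDerivAt_id t).smul_const v).const_add x
  have hx0 : x + (0 : ℝ) • v = x := by simp
  have htend : Filter.Tendsto (fun t : ℝ => x + t • v) (nhds 0) (nhds x) := by
    simpa using (hl 0).continuousAt.tendsto
  have hmin : IsLocalMin (fun t : ℝ => V (x + t • v)) 0 := by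
    filter_upwards [htend.eventually h] with t ht
    simpa using ht
  have hd1 : deriv (fun t : ℝ => V (x + t • v)) =ᶠ[nhds 0]
      fun t => fderiv ℝ V (x + t • v) v := by
    filter_upwards [htend.eventually (hV.eventually (by simp))] with t ht
    exact ((ht.differentiableAt (by simp)).hasFDerivAt.comp_hasDerivAt t (hl t)).deriv
  have hcont : ContinuousAt (fun t : ℝ => V (x + t • v)) 0 := by
    refine ContinuousAt.comp (g := V) ?_ (hl 0).continuousAt
    rw [hx0]; exact hV.continuousAt
  have hd2 : HasDerivAt (fun t : ℝ => fderiv ℝ V (x + t • v) v) (hess V x v v) 0 := by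
    have hF : HasFDerivAt (fun y => fderiv ℝ V y v) (fderiv ℝ (fun y => fderiv ℝ V y v) x)
        (x + (0 : ℝ) • v) := by
      rw [hx0]
      exact ((differentiableAt_fderiv_of_contDiffAt hV).clm_apply
        (differentiableAt_const v)).hasFDerivAt
    rw [← fderiv_fderiv_apply hV]
    exact hF.comp_hasDerivAt 0 (hl 0)
  have := deriv_deriv_nonneg_of_isLocalMin hcont hmin
  rwa [hd1.deriv_eq, hd2.deriv] at this

/-- The trace of a positive semidefinite Hessian dominates its value on any unit vector `ν`:
the difference is the sum of the Hessian over the tangential projections `eᵢ - νᵢ ν`. -/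
theorem hess_unit_le_trace {d : ℕ} {V : Euc d → ℝ} {x : Euc d}
    (hpos : ∀ v, 0 ≤ hess V x v v) (ν : Euc d) (hν : ‖ν‖ = 1) :
    hess V x ν ν ≤ ∑ i, hess V x (EuclideanSpace.single i 1) (EuclideanSpace.single i 1) := by
  have hs : ∑ i, ν i * ν i = 1 := by
    have := EuclideanSpace.real_norm_sq_eq ν
    rw [hν] at this
    simpa [sq] using this.symm
  have hexp : ν = ∑ i, ν i • EuclideanSpace.single i (1 : ℝ) := by
    ext j; simp [Pi.single_apply]
  have h1 : ∑ i, ν i * hess V x (EuclideanSpace.single i 1) ν = hess V x ν ν := by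
    have : fderiv ℝ (fderiv ℝ V) x ν = ∑ i, ν i •
        fderiv ℝ (fderiv ℝ V) x (EuclideanSpace.single i 1) := by
      conv_lhs => rw [hexp]
      simp only [map_sum, map_smul]
    simp only [hess]
    rw [this]
    simp
  have h2 : ∑ i, ν i * hess V x ν (EuclideanSpace.single i 1) = hess V x ν ν := by
    have : hess V x ν (∑ i, ν i • EuclideanSpace.single i (1 : ℝ)) =
        ∑ i, ν i * hess V x ν (EuclideanSpace.single i 1) := by
      simp only [hess, map_sum, map_smul, smul_eq_mul]
    rw [← this, ← hexp]
  have h3 : 0 ≤ ∑ i, hess V x (EuclideanSpace.single i 1 - ν i • ν)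
      (EuclideanSpace.single i 1 - ν i • ν) := Finset.sum_nonneg fun i _ => hpos _
  have h4 : ∀ i, hess V x (EuclideanSpace.single i 1 - ν i • ν)
      (EuclideanSpace.single i 1 - ν i • ν) =
      hess V x (EuclideanSpace.single i 1) (EuclideanSpace.single i 1)
      - ν i * hess V x (EuclideanSpace.single i 1) ν
      - ν i * hess V x ν (EuclideanSpace.single i 1) + ν i * ν i * hess V x ν ν := fun i => by
    simp only [hess, map_sub, map_smul, _root_.sub_apply,
      _root_.smul_apply, smul_eq_mul]
    ring
  simp only [h4, Finset.sum_add_distrib, Finset.sum_sub_distrib, h1, h2, ← Finset.sum_mul, hs] at h3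
  linarith

theorem cylL_nonneg_of_isLocalMin {d : ℕ} (α n : ℝ) {V : Euc d → ℝ} {x : Euc d} (hx : x ≠ 0)
    (hV : ContDiffAt ℝ 2 V x) (h : IsLocalMin V x) : 0 ≤ cylL α n V x := by
  have hp := hess_nonneg_of_isLocalMin hV h
  have ht := hess_unit_le_trace hp (‖x‖⁻¹ • x) (norm_smul_inv_norm (𝕜 := ℝ) hx)
  have h0 : fderiv ℝ V x = 0 := h.fderiv_eq_zero
  have := mul_nonneg (sq_nonneg α) (hp (‖x‖⁻¹ • x))
  rw [cylL_eq_hess α n hx hV, h0]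
  simp only [_root_.zero_apply, mul_zero, add_zero, sub_zero]
  linarith

/-! ### Comparison on annuli and the limit -/

/-- Comparison on the annulus `1 ≤ r ≤ R` with the strict subsolution `m (r^(-s) - R^(-s))`. -/
theorem annulus_comparison {d : ℕ} {α n m s R : ℝ} (hα : 0 < α) (hn : 2 < n) (hm : 0 < m)
    (hs : n - 2 < s) {f : Euc d → ℝ} (hf : ContDiffOn ℝ 2 f {(0 : Euc d)}ᶜ)
    (hfpos : ∀ x : Euc d, x ≠ 0 → 0 < f x)
    (hsuper : ∀ x : Euc d, x ≠ 0 → cylL α n f x ≤ 0)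
    (hmin : ∀ x : Euc d, ‖x‖ = 1 → m ≤ f x) {x : Euc d} (h1 : 1 ≤ ‖x‖) (hR : ‖x‖ ≤ R) :
    m * (‖x‖ ^ (-s) - R ^ (-s)) ≤ f x := by
  have hR0 : 0 < R := by linarith
  have hfc : ∀ y : Euc d, y ≠ 0 → ContDiffAt ℝ 2 f y := fun y hy =>
    hf.contDiffAt (isOpen_compl_singleton.mem_nhds hy)
  have hφc : ∀ y : Euc d, y ≠ 0 → ContDiffAt ℝ 2 (fun z : Euc d => m * ‖z‖ ^ (-s)) y :=
    fun y hy => contDiffAt_const.mul (contDiffAt_norm_rpow _ hy)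
  set u : Euc d → ℝ := fun y => f y - m * ‖y‖ ^ (-s) with hu
  have huc : ∀ y : Euc d, y ≠ 0 → ContDiffAt ℝ 2 u y := fun y hy => (hfc y hy).sub (hφc y hy)
  have hne : ∀ y : Euc d, 1 ≤ ‖y‖ → y ≠ 0 := fun y hy => norm_pos_iff.mp (by linarith)
  set K : Set (Euc d) := closedBall 0 R ∩ {y | 1 ≤ ‖y‖} with hK
  have hKc : IsCompact K :=
    (isCompact_closedBall 0 R).inter_right (isClosed_le continuous_const continuous_norm)
  have hxK : x ∈ K := ⟨by simpa using hR, h1⟩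
  obtain ⟨z, hzK, hz⟩ := hKc.exists_isMinOn ⟨x, hxK⟩
    (fun y hy => (huc y (hne y hy.2)).continuousAt.continuousWithinAt)
  have hzx : u z ≤ u x := hz hxK
  have hzR : ‖z‖ ≤ R := by simpa using hzK.1
  have hz1 : 1 ≤ ‖z‖ := hzK.2
  have hz0 := hne z hz1
  suffices hb : -(m * R ^ (-s)) ≤ u z by
    simp only [hu] at hzx hb
    linarith
  have hRs : 0 < m * R ^ (-s) := by positivity
  rcases hz1.eq_or_lt with e1 | l1
  · have := hmin z e1.symm
    simp only [hu, ← e1, Real.one_rpow]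
    linarith
  rcases hzR.eq_or_lt with e2 | l2
  · have := hfpos z hz0
    simp only [hu, e2]
    linarith
  -- An interior minimum would force `0 ≤ 𝓛u`, against `𝓛f ≤ 0 < 𝓛(m r^(-s))`.
  exfalso
  have hKn : K ∈ nhds z := by
    refine Filter.inter_mem (closedBall_mem_nhds_of_mem (by simpa using l2)) ?_
    filter_upwards [continuous_norm.continuousAt.eventually_const_lt l1] with y hy using hy.le
  have hge := cylL_nonneg_of_isLocalMin α n hz0 (huc z hz0) (hz.isLocalMin hKn)
  rw [hu, cylL_sub α n hz0 (hfc z hz0) (hφc z hz0),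
    cylL_const_mul α n m hz0 (contDiffAt_norm_rpow _ hz0), cylL_norm_rpow α n _ hz0] at hge
  have hlt : 0 < m * (α ^ 2 * s * (s - (n - 2)) * ‖z‖ ^ (-s - 2)) := by
    have : 0 < s := by linarith
    have : 0 < s - (n - 2) := by linarith
    have : 0 < ‖z‖ := by linarith
    positivity
  have := hsuper z hz0
  have e : α ^ 2 * -s * (-s + n - 2) = α ^ 2 * s * (s - (n - 2)) := by ring
  rw [e] at hge
  linarith

/-- **Lemma (lower bound for `𝓛`-superharmonic functions).** If `f > 0` is `C²` on the
cylinder and `𝓛f ≤ 0`, then `f(r,θ) ≥ A r^{2-n}` for `r > ρ`, for some `ρ, A > 0`. -/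
theorem superharmonic_lower_bound (d : ℕ) (α n : ℝ) (hd : 2 ≤ d)
    (hα : 0 < α) (hn : 2 < n) (f : Euc d → ℝ)
    (hf : ContDiffOn ℝ 2 f {(0 : Euc d)}ᶜ)
    (hfpos : ∀ x : Euc d, x ≠ 0 → 0 < f x)
    (hsuper : ∀ x : Euc d, x ≠ 0 → cylL α n f x ≤ 0) :
    ∃ ρ A : ℝ, 0 < ρ ∧ 0 < A ∧ ∀ x : Euc d, ρ < ‖x‖ → A * ‖x‖ ^ (2 - n) ≤ f x := by
  obtain ⟨z, hz1, hz⟩ := (isCompact_sphere (0 : Euc d) 1).exists_isMinOn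
    ⟨EuclideanSpace.single ⟨0, by omega⟩ 1, by simp⟩
    (hf.continuousOn.mono fun y hy => by
      have : ‖y‖ = 1 := by simpa using hy
      exact norm_ne_zero_iff.mp (by rw [this]; exact one_ne_zero))
  have hz0 : z ≠ 0 := norm_ne_zero_iff.mp (by
    rw [show ‖z‖ = 1 by simpa using hz1]; exact one_ne_zero)
  have hmin : ∀ y : Euc d, ‖y‖ = 1 → f z ≤ f y := fun y hy => hz (by simpa using hy)
  refine ⟨1, f z, one_pos, hfpos z hz0, fun x hx => ?_⟩
  have hstep : ∀ s, n - 2 < s → f z * ‖x‖ ^ (-s) ≤ f x := fun s hs => by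
    have ht : Filter.Tendsto (fun R : ℝ => f z * (‖x‖ ^ (-s) - R ^ (-s))) Filter.atTop
        (nhds (f z * (‖x‖ ^ (-s) - 0))) :=
      (tendsto_const_nhds.sub (tendsto_rpow_neg_atTop (by linarith))).const_mul _
    rw [sub_zero] at ht
    refine le_of_tendsto ht ?_
    filter_upwards [Filter.eventually_ge_atTop ‖x‖] with R hR
    exact annulus_comparison hα hn (hfpos z hz0) hs hf hfpos hsuper hmin hx.le hR
  have hc : Continuous fun s : ℝ => f z * ‖x‖ ^ (-s) :=
    continuous_const.mul ((Real.continuous_const_rpow (by linarith)).comp continuous_neg)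
  have ht : Filter.Tendsto (fun s : ℝ => f z * ‖x‖ ^ (-s)) (nhdsWithin (n - 2) (Set.Ioi (n - 2)))
      (nhds (f z * ‖x‖ ^ (-(n - 2)))) := hc.continuousAt.tendsto.mono_left nhdsWithin_le_nhds
  rw [neg_sub] at ht
  exact le_of_tendsto ht (Filter.eventually_of_mem self_mem_nhdsWithin hstep)
end
end

section
/- Let u be a positive solution of div(|x|^{-2a}∇u) + |x|^{-bp} u^{p-1} = 0 in ℝ^d, with p ∈ (2, 2d/(d-2)) and a,b satisfying the admissibility conditions, and let w be the associated cylinder function solving -𝓛w = w^{p-1}. Then for every t < -1 and every s ≥ max{2, 2(p+t)/(p-2)} there exists C > 0 such that for every positive η = η(r) ∈ C_c^∞(0,∞): ∫_{(0,∞)×S^{d-1}} w^{p+t} η^s dμ + ∫_{(0,∞)×S^{d-1}} w^t |Dw|² η^s dμ ≤ C ∫_{(0,∞)×S^{d-1}} w^{2+t} |Dη|² η^{s-2} dμ. -/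
/-!
The function `w` satisfies `-𝓛w = w^{p-1}` away from the origin: writing `stretch α` for the map
`(r, θ) ↦ (r^α, θ)`, so that `u = w ∘ stretch α`, the chain rule turns `div(|x|^{-2a} ∇u)` into
`|x|^{2α-2-2a} (𝓛w) ∘ stretch α`, and `2α-2-2a = -bp` (`cylL_of_rep`, `cyl_param`).

Multiply this equation by `w^{1+t} η^s` and integrate. Since `|x|^{n-d} 𝓛w` is the Euclidean
divergence of the field `|x|^{n-d} (∇w + (α² - 1) w' x/|x|)` (`sum_flux_fderiv`), and since
`w^{1+t} η^s` is `C¹` with compact support in an annulus (here `s ≥ 2` is used), integration by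
parts gives, with `k = -(1+t) > 0`,
`∫ w^{p+t} η^s dμ + k ∫ w^t |Dw|² η^s dμ = s ∫ w^{1+t} η^{s-1} ⟨Dw, Dη⟩ dμ`.
By Young's inequality the right-hand side is at most
`(k/2) ∫ w^t |Dw|² η^s dμ + (s²/2k) ∫ w^{2+t} |Dη|² η^{s-2} dμ` (`young_pointwise`), and the first
of these terms is absorbed on the left (`caccioppoli_aux`). All integrands are continuous on the
annulus, so every integral is finite.
-/

open Real MeasureTheory Metric
open scoped RealInnerProductSpace

noncomputable section

/-! ### The flux field and the divergence form of `𝓛` -/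

lemma hasFDerivAt_norm_rpow_ne {d : ℕ} (m : ℝ) {x : Euc d} (hx : x ≠ 0) :
    HasFDerivAt (fun y : Euc d => ‖y‖ ^ m) ((m * ‖x‖ ^ (m - 2)) • innerSL ℝ x) x := by
  have hn : 0 < ‖x‖ := norm_pos_iff.2 hx
  have h1 := (hasStrictFDerivAt_norm_sq x).hasFDerivAt.rpow_const (p := m / 2)
    (Or.inl (by positivity))
  have e : (fun y : Euc d => ‖y‖ ^ m) = fun y => (‖y‖ ^ 2) ^ (m / 2) := by
    funext y
    rw [← Real.rpow_natCast, ← Real.rpow_mul (norm_nonneg _)]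
    congr 1; push_cast; ring
  rw [e]
  refine h1.congr_fderiv ?_
  have : (‖x‖ ^ 2) ^ (m / 2 - 1) = ‖x‖ ^ (m - 2) := by
    rw [← Real.rpow_natCast, ← Real.rpow_mul (norm_nonneg _)]
    congr 1; push_cast; ring
  rw [this]
  ext v
  simp
  ring

lemma sum_coord_smul {d : ℕ} (x : Euc d) :
    ∑ i, x i • EuclideanSpace.single i (1 : ℝ) = x := by
  ext j
  simp [Finset.sum_apply, Pi.single_apply]

lemma sum_coord_apply {d : ℕ} (x : Euc d) (l : Euc d →L[ℝ] ℝ) :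
    ∑ i, x i * l (EuclideanSpace.single i (1 : ℝ)) = l x := by
  conv_rhs => rw [← sum_coord_smul x]
  simp

lemma sum_coord_sq {d : ℕ} (x : Euc d) : ∑ i, x i * x i = ‖x‖ ^ 2 := by
  rw [EuclideanSpace.norm_sq_eq]
  simp [sq]

lemma hasFDerivAt_coord {d : ℕ} (i : Fin d) (x : Euc d) :
    HasFDerivAt (fun y : Euc d => y i) (EuclideanSpace.proj i : Euc d →L[ℝ] ℝ) x :=
  ContinuousLinearMap.hasFDerivAt (EuclideanSpace.proj i : Euc d →L[ℝ] ℝ)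

/-- The `i`-th component of the vector field `|y|^m (L + β (L(y)/|y|) y/|y|)`, where the field of
linear forms `L` is identified with a vector field. For `L = dw`, `m = n - d`, `β = α² - 1`
its divergence is `|y|^{n-d} 𝓛w`; for `L = dw ∘ stretch`, `m = α - 1 - 2a`, `β = α - 1` it is
the field `|y|^{-2a} ∇u`. -/
def flux {d : ℕ} (m β : ℝ) (L : Euc d → Euc d →L[ℝ] ℝ) (i : Fin d) (y : Euc d) : ℝ :=
  ‖y‖ ^ m * L y (EuclideanSpace.single i 1) + β * (‖y‖ ^ (m - 2) * y i * L y y)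

lemma hasFDerivAt_flux {d : ℕ} (m β : ℝ) {L : Euc d → Euc d →L[ℝ] ℝ}
    {L' : Euc d →L[ℝ] Euc d →L[ℝ] ℝ} {x : Euc d} (hx : x ≠ 0) (hL : HasFDerivAt L L' x)
    (i : Fin d) :
    ∃ D : Euc d →L[ℝ] ℝ, HasFDerivAt (flux m β L i) D x ∧
      ∀ v, D v = ‖x‖ ^ m * L' v (EuclideanSpace.single i 1)
        + m * ‖x‖ ^ (m - 2) * ⟪x, v⟫ * L x (EuclideanSpace.single i 1)
        + β * (‖x‖ ^ (m - 2) * x i * (L' v x + L x v)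
          + ((m - 2) * ‖x‖ ^ (m - 2 - 2) * ⟪x, v⟫ * x i + ‖x‖ ^ (m - 2) * v i) * L x x) := by
  refine ⟨_, ((hasFDerivAt_norm_rpow_ne m hx).mul (hL.clm_apply (hasFDerivAt_const _ _))).add
    ((((hasFDerivAt_norm_rpow_ne (m - 2) hx).mul (hasFDerivAt_coord i x)).mul
      (hL.clm_apply (hasFDerivAt_id x))).const_mul β), fun v => ?_⟩
  simp
  ring

/-- The divergence of `flux m β L`. -/
lemma sum_flux {d : ℕ} (m β : ℝ) {L : Euc d → Euc d →L[ℝ] ℝ}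
    {L' : Euc d →L[ℝ] Euc d →L[ℝ] ℝ} {x : Euc d} (hx : x ≠ 0) (hL : HasFDerivAt L L' x) :
    ∑ i, fderiv ℝ (flux m β L i) x (EuclideanSpace.single i 1) =
      ‖x‖ ^ m * ∑ i, L' (EuclideanSpace.single i 1) (EuclideanSpace.single i 1)
        + m * ‖x‖ ^ (m - 2) * L x x
        + β * ‖x‖ ^ (m - 2) * (L' x x + (m + d - 1) * L x x) := by
  have hn : 0 < ‖x‖ := norm_pos_iff.2 hx
  have key : ∀ i, fderiv ℝ (flux m β L i) x (EuclideanSpace.single i 1) =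
      ‖x‖ ^ m * L' (EuclideanSpace.single i 1) (EuclideanSpace.single i 1)
      + m * ‖x‖ ^ (m - 2) * (x i * L x (EuclideanSpace.single i 1))
      + β * (‖x‖ ^ (m - 2) * (x i * (L'.flip x) (EuclideanSpace.single i 1)
          + x i * L x (EuclideanSpace.single i 1))
        + (m - 2) * ‖x‖ ^ (m - 2 - 2) * L x x * (x i * x i) + ‖x‖ ^ (m - 2) * L x x) := by
    intro i
    obtain ⟨D, hD, hDv⟩ := hasFDerivAt_flux m β hx hL i
    rw [hD.fderiv, hDv]
    simp [EuclideanSpace.inner_single_right]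
    ring
  have hpow : ‖x‖ ^ (m - 2 - 2) * ‖x‖ ^ 2 = ‖x‖ ^ (m - 2) := by
    rw [← Real.rpow_natCast, ← Real.rpow_add hn]
    congr 1; push_cast; ring
  simp_rw [key]
  simp only [Finset.sum_add_distrib, ← Finset.mul_sum, sum_coord_apply, sum_coord_sq,
    Finset.sum_const, Finset.card_univ, Fintype.card_fin, nsmul_eq_mul]
  simp only [ContinuousLinearMap.flip_apply]
  linear_combination (β * (m - 2) * L x x) * hpow

/-- Radially, `x/|x|` is constant, so `w''` is the Hessian evaluated on the unit radial vector. -/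
lemma rD2_eq {d : ℕ} {W : Euc d → ℝ} {x : Euc d} (hx : x ≠ 0)
    {H : Euc d →L[ℝ] Euc d →L[ℝ] ℝ} (hH : HasFDerivAt (fderiv ℝ W) H x) :
    rD2 W x = ‖x‖ ^ (-2 : ℝ) * H x x := by
  have hn : 0 < ‖x‖ := norm_pos_iff.2 hx
  have h1 := (hasFDerivAt_norm_rpow_ne (-1) hx).mul (hH.clm_apply (hasFDerivAt_id x))
  have e0 : rD W = (fun y : Euc d => ‖y‖ ^ (-1 : ℝ)) * fun y => fderiv ℝ W y (id y) := by
    funext y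
    simp [rD, Real.rpow_neg_one]
  have e1 : ‖x‖ ^ (-1 - 2 : ℝ) = (‖x‖ ^ 3)⁻¹ := by
    rw [← Real.rpow_natCast, ← Real.rpow_neg hn.le]; congr 1; norm_num
  have e2 : ‖x‖ ^ (-2 : ℝ) = (‖x‖ ^ 2)⁻¹ := by
    rw [← Real.rpow_natCast, ← Real.rpow_neg hn.le]; congr 1
  rw [rD2, rD, e0, h1.fderiv]
  simp [Real.rpow_neg_one, e1, e2]
  field_simp
  ring

lemma eLap_eq {d : ℕ} {W : Euc d → ℝ} {x : Euc d}
    {H : Euc d →L[ℝ] Euc d →L[ℝ] ℝ} (hH : HasFDerivAt (fderiv ℝ W) H x) :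
    eLap W x = ∑ i, H (EuclideanSpace.single i 1) (EuclideanSpace.single i 1) := by
  refine Finset.sum_congr rfl fun i _ => ?_
  rw [(hH.clm_apply (hasFDerivAt_const (EuclideanSpace.single i (1 : ℝ)) x)).fderiv]
  simp

lemma cylL_eq {d : ℕ} (α n : ℝ) {W : Euc d → ℝ} {x : Euc d} (hx : x ≠ 0)
    {H : Euc d →L[ℝ] Euc d →L[ℝ] ℝ} (hH : HasFDerivAt (fderiv ℝ W) H x) :
    cylL α n W x = ∑ i, H (EuclideanSpace.single i 1) (EuclideanSpace.single i 1)
      + ((α ^ 2 - 1) * H x x + (α ^ 2 * (n - 1) - (d - 1)) * fderiv ℝ W x x)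
        * (‖x‖ ^ 2)⁻¹ := by
  have hn : 0 < ‖x‖ := norm_pos_iff.2 hx
  have e2 : ‖x‖ ^ (-2 : ℝ) = (‖x‖ ^ 2)⁻¹ := by
    rw [← Real.rpow_natCast, ← Real.rpow_neg hn.le]; congr 1
  rw [cylL, sphLapR2, rD2_eq hx hH, eLap_eq hH, e2, rD]
  simp
  field_simp
  ring

/-- `𝓛` in divergence form: multiplied by the density of `dμ` with respect to Lebesgue measure,
`𝓛w` is the Euclidean divergence of `|x|^{n-d} (∇w + (α² - 1) w' x/|x|)`. -/
lemma sum_flux_fderiv {d : ℕ} (α n : ℝ) {W : Euc d → ℝ} {x : Euc d} (hx : x ≠ 0)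
    {H : Euc d →L[ℝ] Euc d →L[ℝ] ℝ} (hH : HasFDerivAt (fderiv ℝ W) H x) :
    ∑ i, fderiv ℝ (flux (n - d) (α ^ 2 - 1) (fderiv ℝ W) i) x (EuclideanSpace.single i 1) =
      ‖x‖ ^ (n - d) * cylL α n W x := by
  have hn : 0 < ‖x‖ := norm_pos_iff.2 hx
  have hpow : ‖x‖ ^ (n - d - 2) = ‖x‖ ^ (n - d) * (‖x‖ ^ 2)⁻¹ := by
    rw [Real.rpow_sub hn, div_eq_mul_inv]; norm_num
  rw [sum_flux _ _ hx hH, cylL_eq α n hx hH, hpow]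
  ring

lemma normSq_gradient {d : ℕ} (W : Euc d → ℝ) (x : Euc d) :
    ‖gradient W x‖ ^ 2 = ∑ i, fderiv ℝ W x (EuclideanSpace.single i 1) ^ 2 := by
  rw [EuclideanSpace.norm_sq_eq]
  refine Finset.sum_congr rfl fun i _ => ?_
  have : gradient W x i = fderiv ℝ W x (EuclideanSpace.single i 1) := by
    rw [← inner_gradient_left (𝕜 := ℝ), EuclideanSpace.inner_single_right]
    simp
  rw [this]; simp

lemma cylGradSq_eq {d : ℕ} (α : ℝ) (W : Euc d → ℝ) {x : Euc d} (hx : x ≠ 0) :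
    cylGradSq α W x = ∑ i, fderiv ℝ W x (EuclideanSpace.single i 1) ^ 2
      + (α ^ 2 - 1) * rD W x ^ 2 := by
  have hn : 0 < ‖x‖ := norm_pos_iff.2 hx
  have h : ⟪gradient W x, rD W x • (‖x‖⁻¹ • x)⟫ = rD W x ^ 2 := by
    rw [gradient, InnerProductSpace.toDual_symm_apply, map_smul, smul_eq_mul]
    rw [rD]; ring
  have h2 : ‖rD W x • (‖x‖⁻¹ • x)‖ ^ 2 = rD W x ^ 2 := by
    rw [norm_smul, norm_smul, norm_inv, norm_norm, inv_mul_cancel₀ hn.ne']; simp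
  rw [cylGradSq, tGrad, norm_sub_sq_real, h, h2, normSq_gradient]
  ring

/-! ### From the equation for `u` to the equation for `w` -/

/-- The map `(r, θ) ↦ (r^α, θ)` in Cartesian form, `y ↦ |y|^{α-1} y`. -/
def stretch {d : ℕ} (α : ℝ) (y : Euc d) : Euc d := (‖y‖ ^ (α - 1) : ℝ) • y

lemma hasFDerivAt_stretch {d : ℕ} (α : ℝ) {x : Euc d} (hx : x ≠ 0) :
    ∃ A : Euc d →L[ℝ] Euc d, HasFDerivAt (stretch α) A x ∧
      ∀ v, A v = ‖x‖ ^ (α - 1) • v + ((α - 1) * ‖x‖ ^ (α - 1 - 2) * ⟪x, v⟫) • x := by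
  refine ⟨_, (hasFDerivAt_norm_rpow_ne (α - 1) hx).smul (hasFDerivAt_id x), fun v => ?_⟩
  simp

lemma stretch_ne_zero {d : ℕ} (α : ℝ) {x : Euc d} (hx : x ≠ 0) : stretch α x ≠ 0 :=
  smul_ne_zero (Real.rpow_pos_of_pos (norm_pos_iff.2 hx) _).ne' hx

lemma exists_stretch_eq {d : ℕ} {α : ℝ} (hα : α ≠ 0) {y : Euc d} (hy : y ≠ 0) :
    ∃ x : Euc d, x ≠ 0 ∧ stretch α x = y := by
  have hn : 0 < ‖y‖ := norm_pos_iff.2 hy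
  refine ⟨stretch α⁻¹ y, stretch_ne_zero _ hy, ?_⟩
  have h : ‖stretch α⁻¹ y‖ = ‖y‖ ^ α⁻¹ := by
    rw [stretch, norm_smul, Real.norm_of_nonneg (Real.rpow_nonneg hn.le _)]
    conv_lhs => rw [← Real.rpow_one ‖y‖]
    rw [Real.rpow_one, ← Real.rpow_add_one hn.ne']
    simp
  rw [stretch, h, stretch, smul_smul, ← Real.rpow_mul hn.le, ← Real.rpow_add hn]
  have : α⁻¹ * (α - 1) + (α⁻¹ - 1) = 0 := by field_simp; ring
  rw [this]; simp

lemma fderiv_of_rep {d : ℕ} {α : ℝ} {u W : Euc d → ℝ}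
    (hW : ∀ x : Euc d, x ≠ 0 → ContDiffAt ℝ 2 W x)
    (huW : ∀ x : Euc d, x ≠ 0 → u x = W (stretch α x)) {x : Euc d} (hx : x ≠ 0) (v : Euc d) :
    fderiv ℝ u x v = ‖x‖ ^ (α - 1) * fderiv ℝ W (stretch α x) v
      + (α - 1) * ‖x‖ ^ (α - 1 - 2) * ⟪x, v⟫ * fderiv ℝ W (stretch α x) x := by
  obtain ⟨A, hA, hAv⟩ := hasFDerivAt_stretch α hx
  have hd : DifferentiableAt ℝ W (stretch α x) :=
    (hW _ (stretch_ne_zero α hx)).differentiableAt (by norm_num)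
  have h := hd.hasFDerivAt.comp x hA
  have e : u =ᶠ[nhds x] W ∘ stretch α := by
    filter_upwards [isOpen_compl_singleton.mem_nhds hx] with y hy using huW y hy
  rw [e.fderiv_eq, h.fderiv]
  simp [hAv]

lemma hasFDerivAt_fderiv {d : ℕ} {W : Euc d → ℝ} {x : Euc d} (hW : ContDiffAt ℝ 2 W x) :
    HasFDerivAt (fderiv ℝ W) (fderiv ℝ (fderiv ℝ W) x) x :=
  ((hW.fderiv_right (m := 1) (by norm_num)).differentiableAt (by norm_num)).hasFDerivAt

/-- The equation for `u` becomes `-𝓛w = w^{p-1}`: at `y = stretch α x`, the divergence of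
`|x|^{-2a} ∇u` is `|x|^{2α-2-2a} 𝓛w(y)`. -/
lemma cylL_of_rep {d : ℕ} {a b p α n : ℝ} {u W : Euc d → ℝ}
    (hα : α ≠ 0) (hn : α * (n - 1) = α + d - 2 - 2 * a) (hp : 2 * α - 2 - 2 * a = -(b * p))
    (hu : ∀ x : Euc d, x ≠ 0 → ContDiffAt ℝ 2 u x)
    (hsol : ∀ x : Euc d, x ≠ 0 →
      divg (fun y => (‖y‖ ^ (-(2 * a)) : ℝ) • gradient u y) x
        + ‖x‖ ^ (-(b * p)) * u x ^ (p - 1) = 0)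
    (hW : ∀ x : Euc d, x ≠ 0 → ContDiffAt ℝ 2 W x)
    (huW : ∀ x : Euc d, x ≠ 0 → u x = W (stretch α x)) {y : Euc d} (hy : y ≠ 0) :
    cylL α n W y = -W y ^ (p - 1) := by
  obtain ⟨x, hx, rfl⟩ := exists_stretch_eq hα hy
  have hX : 0 < ‖x‖ := norm_pos_iff.2 hx
  obtain ⟨A, hA, hAv⟩ := hasFDerivAt_stretch α hx
  have hH := hasFDerivAt_fderiv (hW _ hy)
  set H := fderiv ℝ (fderiv ℝ W) (stretch α x)
  have hL : HasFDerivAt (fun z => fderiv ℝ W (stretch α z)) (H.comp A) x := hH.comp x hA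
  have hF : DifferentiableAt ℝ (fun z => (‖z‖ ^ (-(2 * a)) : ℝ) • gradient u z) x := by
    refine (hasFDerivAt_norm_rpow_ne _ hx).differentiableAt.smul ?_
    exact (InnerProductSpace.toDual ℝ (Euc d)).symm.differentiableAt.comp x
      (hasFDerivAt_fderiv (hu x hx)).differentiableAt
  have hdiv : divg (fun z => (‖z‖ ^ (-(2 * a)) : ℝ) • gradient u z) x =
      ∑ i, fderiv ℝ (flux (α - 1 - 2 * a) (α - 1) (fun z => fderiv ℝ W (stretch α z)) i) x
        (EuclideanSpace.single i 1) := by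
    refine Finset.sum_congr rfl fun i _ => ?_
    have e : flux (α - 1 - 2 * a) (α - 1) (fun z => fderiv ℝ W (stretch α z)) i =ᶠ[nhds x]
        fun z => ⟪(‖z‖ ^ (-(2 * a)) : ℝ) • gradient u z, EuclideanSpace.single i 1⟫ := by
      filter_upwards [isOpen_compl_singleton.mem_nhds hx] with z hz
      have hz : z ≠ 0 := hz
      have hZ : 0 < ‖z‖ := norm_pos_iff.2 hz
      rw [real_inner_smul_left, inner_gradient_left, fderiv_of_rep hW huW hz, flux]
      have e1 : ‖z‖ ^ (α - 1 - 2 * a) = ‖z‖ ^ (-(2 * a)) * ‖z‖ ^ (α - 1) := by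
        rw [← Real.rpow_add hZ]; congr 1; ring
      have e2 : ‖z‖ ^ (α - 1 - 2 * a - 2) = ‖z‖ ^ (-(2 * a)) * ‖z‖ ^ (α - 1 - 2) := by
        rw [← Real.rpow_add hZ]; congr 1; ring
      rw [e1, e2, EuclideanSpace.inner_single_right]
      simp
      ring
    rw [e.fderiv_eq, fderiv_inner_apply ℝ hF (differentiableAt_const _)]
    simp
  have hs := hsol x hx
  rw [hdiv, sum_flux _ _ hx hL, huW x hx] at hs
  have hsum : ∑ i, (H.comp A) (EuclideanSpace.single i 1) (EuclideanSpace.single i 1) =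
      ‖x‖ ^ (α - 1) * ∑ i, H (EuclideanSpace.single i 1) (EuclideanSpace.single i 1)
        + (α - 1) * ‖x‖ ^ (α - 1 - 2) * H x x := by
    rw [← sum_coord_apply x (H x), Finset.mul_sum, Finset.mul_sum, ← Finset.sum_add_distrib]
    refine Finset.sum_congr rfl fun i _ => ?_
    simp [hAv, EuclideanSpace.inner_single_right]
    ring
  have hxx : (H.comp A) x x = ‖x‖ ^ (α - 1) * H x x
      + (α - 1) * ‖x‖ ^ (α - 1 - 2) * ‖x‖ ^ 2 * H x x := by
    simp [hAv]
  rw [hsum, hxx] at hs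
  rw [cylL_eq α n hy hH]
  have hc : 0 < ‖x‖ ^ (α - 1) := Real.rpow_pos_of_pos hX _
  have hm : 0 < ‖x‖ ^ (α - 1 - 2 * a) := Real.rpow_pos_of_pos hX _
  have e1 : ‖x‖ ^ (-(b * p)) = ‖x‖ ^ (α - 1 - 2 * a) * ‖x‖ ^ (α - 1) := by
    rw [← Real.rpow_add hX, ← hp]; congr 1; ring
  have e2 : ∀ k : ℝ, ‖x‖ ^ (k - 2) = ‖x‖ ^ k * (‖x‖ ^ 2)⁻¹ := by
    intro k
    rw [Real.rpow_sub hX, div_eq_mul_inv]; norm_num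
  simp only [e1, e2] at hs
  have hst : ‖stretch α x‖ = ‖x‖ ^ (α - 1) * ‖x‖ := by
    rw [stretch, norm_smul, Real.norm_of_nonneg hc.le]
  generalize W (stretch α x) ^ (p - 1) = w at *
  generalize hl : fderiv ℝ W (stretch α x) = l at *
  have hl1 : l (stretch α x) = ‖x‖ ^ (α - 1) * l x := by simp [stretch]
  have hl2 : H (stretch α x) (stretch α x) = ‖x‖ ^ (α - 1) * ‖x‖ ^ (α - 1) * H x x := by
    simp [stretch]; ring
  rw [hst, hl1, hl2]
  have key : ‖x‖ ^ (α - 1 - 2 * a) * ‖x‖ ^ (α - 1) * (∑ i,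
      H (EuclideanSpace.single i 1) (EuclideanSpace.single i 1)
      + ((α ^ 2 - 1) * (‖x‖ ^ (α - 1) * ‖x‖ ^ (α - 1) * H x x)
        + (α ^ 2 * (n - 1) - (d - 1)) * (‖x‖ ^ (α - 1) * l x))
        * ((‖x‖ ^ (α - 1) * ‖x‖) ^ 2)⁻¹ + w) = 0 := by
    rw [← hs]
    have : α ^ 2 * (n - 1) = α * (α + d - 2 - 2 * a) := by rw [← hn]; ring
    rw [this]
    field_simp
    ring
  have := (mul_eq_zero.1 key).resolve_left (by positivity)
  linarith

/-! ### Integration on an annulus -/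

lemma integrable_of_annulus {d : ℕ} {f : Euc d → ℝ} {K : Set (Euc d)} (hK : IsCompact K)
    (hK0 : (0 : Euc d) ∉ K) (hf : ∀ x, x ≠ 0 → ContinuousAt f x) (hfK : ∀ x ∉ K, f x = 0) :
    Integrable f := by
  rw [← integrableOn_iff_integrable_of_support_subset (s := K)]
  · refine ContinuousOn.integrableOn_compact hK fun x hx => ?_
    exact (hf x fun h => hK0 (h ▸ hx)).continuousWithinAt
  · intro x hx
    by_contra h
    exact hx (hfK x h)

lemma hasFDerivAt_zero_off {d : ℕ} {g : Euc d → ℝ} {K : Set (Euc d)} (hK : IsClosed K)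
    (hgK : ∀ x ∉ K, g x = 0) {x : Euc d} (hx : x ∉ K) : HasFDerivAt g (0 : Euc d →L[ℝ] ℝ) x := by
  have e : g =ᶠ[nhds x] fun _ => 0 := by
    filter_upwards [hK.isOpen_compl.mem_nhds hx] with y hy using hgK y hy
  exact (hasFDerivAt_const (0 : ℝ) x).congr_of_eventuallyEq e

/-- The divergence theorem for functions that are `C¹` away from the origin and supported in a
compact set avoiding it. -/
lemma integral_fderiv_eq_zero {d : ℕ} {g : Euc d → ℝ} {K : Set (Euc d)} (hK : IsCompact K)
    (hK0 : (0 : Euc d) ∉ K) (hg : ∀ x, x ≠ 0 → ContDiffAt ℝ 1 g x) (hgK : ∀ x ∉ K, g x = 0)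
    (v : Euc d) :
    Integrable (fun x => fderiv ℝ g x v) ∧ ∫ x, fderiv ℝ g x v = 0 := by
  have hi : Integrable (fun x => fderiv ℝ g x v) := by
    refine integrable_of_annulus hK hK0 (fun x hx => ?_) fun x hx => ?_
    · exact (((hg x hx).fderiv_right (m := 0) (by norm_num)).clm_apply contDiffAt_const).continuousAt
    · rw [(hasFDerivAt_zero_off hK.isClosed hgK hx).fderiv]; simp
  refine ⟨hi, ?_⟩
  -- integration by parts against the constant function `1`
  have h := integral_mul_fderiv_eq_neg_fderiv_mul_of_integrable (μ := (volume : Measure (Euc d)))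
    (f := fun _ : Euc d => (1 : ℝ)) (g := g) (v := v) (by simp) (by simpa using hi)
    (by simpa using integrable_of_annulus hK hK0 (fun x hx => (hg x hx).continuousAt) hgK)
    (fun x _ => differentiableAt_const _) (fun x _ => by
      by_cases hx : x = 0
      · subst hx; exact (hasFDerivAt_zero_off hK.isClosed hgK hK0).differentiableAt
      · exact (hg x hx).differentiableAt (by norm_num))
  simpa using h

/-! ### Testing the equation with `w^{1+t} η^s` -/

/-- The test function `w^{1+t} η^s` by which the equation `-𝓛w = w^{p-1}` is multiplied. -/
def testFn {d : ℕ} (W : Euc d → ℝ) (η : ℝ → ℝ) (t s : ℝ) (x : Euc d) : ℝ :=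
  W x ^ (1 + t) * η ‖x‖ ^ s

lemma hasFDerivAt_testFn {d : ℕ} {W : Euc d → ℝ} {η : ℝ → ℝ} (t : ℝ) {s : ℝ} (hs : 1 ≤ s)
    (hη : Differentiable ℝ η) {x : Euc d} (hx : x ≠ 0) (hWx : 0 < W x)
    (hW : DifferentiableAt ℝ W x) :
    ∃ D : Euc d →L[ℝ] ℝ, HasFDerivAt (testFn W η t s) D x ∧
      ∀ v, D v = (1 + t) * W x ^ t * η ‖x‖ ^ s * fderiv ℝ W x v
        + s * W x ^ (1 + t) * η ‖x‖ ^ (s - 1) * deriv η ‖x‖ * (‖x‖⁻¹ * ⟪x, v⟫) := by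
  have h1 : HasFDerivAt (fun y : Euc d => ‖y‖) (‖x‖⁻¹ • innerSL ℝ x) x := by
    have h := hasFDerivAt_norm_rpow_ne 1 hx
    have e : (1 - 2 : ℝ) = -1 := by norm_num
    simpa [e, Real.rpow_neg_one] using h
  have h2 : HasFDerivAt (fun y : Euc d => η ‖y‖) (deriv η ‖x‖ • (‖x‖⁻¹ • innerSL ℝ x)) x :=
    (hη ‖x‖).hasDerivAt.comp_hasFDerivAt x h1
  refine ⟨_, (hW.hasFDerivAt.rpow_const (p := 1 + t) (Or.inl hWx.ne')).mul
    (h2.rpow_const (p := s) (Or.inr hs)), fun v => ?_⟩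
  simp
  ring

/-- The flux paired with `A ∇w + B x/|x|`: its components are `|x|^m (∇w + (α²-1) w' x/|x|)`, so
that pairing it with `∇w` gives `|Dw|²` and pairing it with `x/|x|` gives `α² w'`. -/
lemma sum_flux_mul {d : ℕ} (α m : ℝ) (W : Euc d → ℝ) {x : Euc d} (hx : x ≠ 0) (A B : ℝ) :
    ∑ i, flux m (α ^ 2 - 1) (fderiv ℝ W) i x *
        (A * fderiv ℝ W x (EuclideanSpace.single i 1)
          + B * (‖x‖⁻¹ * ⟪x, EuclideanSpace.single i 1⟫)) =
      ‖x‖ ^ m * (A * cylGradSq α W x + B * (α ^ 2 * rD W x)) := by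
  have hX : 0 < ‖x‖ := norm_pos_iff.2 hx
  have e2 : ‖x‖ ^ (m - 2) = ‖x‖ ^ m * (‖x‖ ^ 2)⁻¹ := by
    rw [Real.rpow_sub hX, div_eq_mul_inv]; norm_num
  have key : ∀ i, flux m (α ^ 2 - 1) (fderiv ℝ W) i x *
        (A * fderiv ℝ W x (EuclideanSpace.single i 1)
          + B * (‖x‖⁻¹ * ⟪x, EuclideanSpace.single i 1⟫)) =
      ‖x‖ ^ m * A * fderiv ℝ W x (EuclideanSpace.single i 1) ^ 2
      + (‖x‖ ^ m * B * ‖x‖⁻¹ + (α ^ 2 - 1) * ‖x‖ ^ (m - 2) * fderiv ℝ W x x * A)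
          * (x i * fderiv ℝ W x (EuclideanSpace.single i 1))
      + (α ^ 2 - 1) * ‖x‖ ^ (m - 2) * fderiv ℝ W x x * B * ‖x‖⁻¹ * (x i * x i) := by
    intro i
    simp [flux, EuclideanSpace.inner_single_right]
    ring
  simp_rw [key]
  rw [Finset.sum_add_distrib, Finset.sum_add_distrib, ← Finset.mul_sum, ← Finset.mul_sum,
    ← Finset.mul_sum, sum_coord_apply, sum_coord_sq, cylGradSq_eq α W hx, e2, rD]
  simp
  field_simp
  ring

/-- Young's inequality absorbs the cross term of the tested equation. The variables stand for
`w = w(x)`, `e = η(|x|)`, `e' = η'(|x|)`, `R = w'(x)` and `Q = |Dw|²(x)`. -/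
lemma young_pointwise {w e e' Q R q t s k α : ℝ} (hw : 0 < w) (he : 0 ≤ e) (hs : 2 ≤ s)
    (hk : 0 < k) (hkt : 1 + t = -k) (hQ : α ^ 2 * R ^ 2 ≤ Q) :
    w ^ (1 + t) * e ^ s * (-w ^ (q - 1)) +
        ((1 + t) * w ^ t * e ^ s * Q + s * w ^ (1 + t) * e ^ (s - 1) * e' * (α ^ 2 * R)) ≤
      -(w ^ (q + t) * e ^ s) - k / 2 * (w ^ t * Q * e ^ s)
        + s ^ 2 / (2 * k) * (w ^ (2 + t) * (α ^ 2 * e' ^ 2) * e ^ (s - 2)) := by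
  have h1 : w ^ (q + t) = w ^ (1 + t) * w ^ (q - 1) := by
    rw [← Real.rpow_add hw]; congr 1; ring
  have h2 : w ^ (2 + t) = w ^ t * w ^ 2 := by
    rw [add_comm, Real.rpow_add hw]; norm_num
  have h3 : w ^ (1 + t) = w ^ t * w := by
    rw [add_comm, Real.rpow_add hw]; norm_num
  -- these two identities also hold at `e = 0`, where both sides vanish since `s ≥ 2`
  have h4 : e ^ s = e ^ (s - 2) * e ^ 2 := by
    rw [← Real.rpow_natCast e 2, ← Real.rpow_add_of_nonneg he (by linarith) (by norm_num)]
    congr 1; push_cast; ring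
  have h5 : e ^ (s - 1) = e ^ (s - 2) * e := by
    have h := Real.rpow_add_of_nonneg he (by linarith : 0 ≤ s - 2) zero_le_one
    rw [Real.rpow_one] at h
    rw [← h]; congr 1; ring
  rw [h1, h2, h3, h4, h5, hkt]
  have hX : 0 ≤ e ^ (s - 2) := Real.rpow_nonneg he _
  have hT : 0 < w ^ t := Real.rpow_pos_of_pos hw _
  generalize e ^ (s - 2) = X at *
  generalize w ^ t = T at *
  have hy : s * w * e * e' * R ≤ k / 2 * (R ^ 2 * e ^ 2) + s ^ 2 / (2 * k) * (w ^ 2 * e' ^ 2) := by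
    have : k / 2 * (R ^ 2 * e ^ 2) + s ^ 2 / (2 * k) * (w ^ 2 * e' ^ 2) - s * w * e * e' * R
        = (k * R * e - s * w * e') ^ 2 / (2 * k) := by
      field_simp; ring
    have : 0 ≤ (k * R * e - s * w * e') ^ 2 / (2 * k) := by positivity
    linarith
  have hy2 := mul_le_mul_of_nonneg_left hy (by positivity : 0 ≤ T * X * α ^ 2)
  have hQ2 := mul_le_mul_of_nonneg_left hQ (by positivity : 0 ≤ k / 2 * (T * X * e ^ 2))
  linarith

lemma contDiffAt_flux {d : ℕ} (m β : ℝ) {W : Euc d → ℝ} (i : Fin d) {x : Euc d} (hx : x ≠ 0)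
    (hW : ContDiffAt ℝ 2 W x) : ContDiffAt ℝ 1 (flux m β (fderiv ℝ W) i) x := by
  have hn : ‖x‖ ≠ 0 := norm_ne_zero_iff.2 hx
  have h1 : ContDiffAt ℝ 1 (fun y : Euc d => ‖y‖) x := contDiffAt_norm ℝ hx
  have h2 : ContDiffAt ℝ 1 (fderiv ℝ W) x := hW.fderiv_right (by norm_num)
  have h3 : ContDiffAt ℝ 1 (fun y : Euc d => y i) x :=
    (EuclideanSpace.proj i : Euc d →L[ℝ] ℝ).contDiff.contDiffAt
  exact ((h1.rpow_const_of_ne hn).mul (h2.clm_apply contDiffAt_const)).add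
    (contDiffAt_const.mul (((h1.rpow_const_of_ne hn).mul h3).mul (h2.clm_apply contDiffAt_id)))

/-- The estimate in the form that comes out of testing the equation with `w^{1+t} η^s`, where
`k = -(1+t) > 0`. -/
lemma caccioppoli_aux {d : ℕ} {α n q t s k : ℝ} {W : Euc d → ℝ} {η : ℝ → ℝ}
    (hpos : ∀ x : Euc d, x ≠ 0 → 0 < W x) (hW : ∀ x : Euc d, x ≠ 0 → ContDiffAt ℝ 2 W x)
    (hL : ∀ x : Euc d, x ≠ 0 → cylL α n W x = -W x ^ (q - 1))
    (hk : 0 < k) (hkt : 1 + t = -k) (hs : 2 ≤ s) (hη : IsCutoff η) :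
    cylIntegral n (fun x => W x ^ (q + t) * η ‖x‖ ^ s)
        + k / 2 * cylIntegral n (fun x => W x ^ t * cylGradSq α W x * η ‖x‖ ^ s) ≤
      s ^ 2 / (2 * k) * cylIntegral n (fun x =>
        W x ^ (2 + t) * (α ^ 2 * deriv η ‖x‖ ^ 2) * η ‖x‖ ^ (s - 2)) := by
  obtain ⟨hη1, hη2, hη3, hη4⟩ := hη
  set K : Set (Euc d) := {x | ‖x‖ ∈ tsupport η} with hKdef
  have hK : IsCompact K := by
    obtain ⟨R, hR⟩ := hη2.isCompact.isBounded.subset_closedBall 0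
    refine Metric.isCompact_of_isClosed_isBounded
      ((isClosed_tsupport η).preimage continuous_norm)
      (Metric.isBounded_closedBall (x := (0 : Euc d)) (r := R) |>.subset fun x hx => ?_)
    simpa using hR hx
  have hK0 : (0 : Euc d) ∉ K := fun h => by simpa using hη3 h
  have hηK : ∀ x ∉ K, η ‖x‖ = 0 := fun x hx => image_eq_zero_of_notMem_tsupport hx
  have hηK' : ∀ x ∉ K, deriv η ‖x‖ = 0 := fun x hx => by
    by_contra h
    exact hx (support_deriv_subset h)
  have hs0 : s ≠ 0 := by linarith
  have cη : ∀ x : Euc d, ContinuousAt (fun y : Euc d => η ‖y‖) x := fun x =>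
    (hη1.continuous.comp continuous_norm).continuousAt
  have cη' : ∀ x : Euc d, ContinuousAt (fun y : Euc d => deriv η ‖y‖) x := fun x =>
    ((hη1.continuous_deriv (by simp)).comp continuous_norm).continuousAt
  have cηr : ∀ r : ℝ, 0 ≤ r → ∀ x : Euc d, ContinuousAt (fun y : Euc d => η ‖y‖ ^ r) x :=
    fun r hr x => (cη x).rpow_const (Or.inr hr)
  have cW : ∀ r : ℝ, ∀ x : Euc d, x ≠ 0 → ContinuousAt (fun y => W y ^ r) x := fun r x hx =>
    (hW x hx).continuousAt.rpow_const (Or.inl (hpos x hx).ne')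
  have cN : ∀ r : ℝ, ∀ x : Euc d, x ≠ 0 → ContinuousAt (fun y : Euc d => ‖y‖ ^ r) x :=
    fun r x hx => (hasFDerivAt_norm_rpow_ne r hx).continuousAt
  have cF : ∀ x : Euc d, x ≠ 0 → ContinuousAt (fderiv ℝ W) x := fun x hx =>
    (hasFDerivAt_fderiv (hW x hx)).continuousAt
  have cR : ∀ x : Euc d, x ≠ 0 → ContinuousAt (rD W) x := fun x hx =>
    (cF x hx).clm_apply ((continuousAt_id.norm.inv₀ (norm_ne_zero_iff.2 hx)).smul continuousAt_id)
  have cG : ∀ x : Euc d, x ≠ 0 → ContinuousAt (cylGradSq α W) x := by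
    intro x hx
    have h : ContinuousAt (fun y => ∑ i, fderiv ℝ W y (EuclideanSpace.single i 1) ^ 2
      + (α ^ 2 - 1) * rD W y ^ 2) x :=
      (tendsto_finsetSum _ fun i _ => ((cF x hx).clm_apply continuousAt_const).pow 2).add
        (((cR x hx).pow 2).const_mul _)
    refine h.congr ?_
    filter_upwards [isOpen_compl_singleton.mem_nhds hx] with y hy
    exact (cylGradSq_eq α W hy).symm
  have i1 : Integrable (fun x : Euc d => W x ^ (q + t) * η ‖x‖ ^ s * ‖x‖ ^ (n - d)) :=
    integrable_of_annulus hK hK0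
      (fun x hx => ((cW _ x hx).mul (cηr s (by linarith) x)).mul (cN _ x hx))
      (fun x hx => by simp [hηK x hx, Real.zero_rpow hs0])
  have i2 : Integrable (fun x : Euc d =>
      W x ^ t * cylGradSq α W x * η ‖x‖ ^ s * ‖x‖ ^ (n - d)) :=
    integrable_of_annulus hK hK0
      (fun x hx => (((cW _ x hx).mul (cG x hx)).mul (cηr s (by linarith) x)).mul (cN _ x hx))
      (fun x hx => by simp [hηK x hx, Real.zero_rpow hs0])
  have i3 : Integrable (fun x : Euc d =>
      W x ^ (2 + t) * (α ^ 2 * deriv η ‖x‖ ^ 2) * η ‖x‖ ^ (s - 2) * ‖x‖ ^ (n - d)) :=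
    integrable_of_annulus hK hK0
      (fun x hx => (((cW _ x hx).mul (((cη' x).pow 2).const_mul _)).mul
        (cηr (s - 2) (by linarith) x)).mul (cN _ x hx))
      (fun x hx => by simp [hηK' x hx])
  have i1n : Integrable (fun x : Euc d => -(W x ^ (q + t) * η ‖x‖ ^ s * ‖x‖ ^ (n - d))) := i1.neg
  have i12 : Integrable (fun x : Euc d => -(W x ^ (q + t) * η ‖x‖ ^ s * ‖x‖ ^ (n - d))
      - k / 2 * (W x ^ t * cylGradSq α W x * η ‖x‖ ^ s * ‖x‖ ^ (n - d))) :=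
    i1n.sub (i2.const_mul _)
  set g : Fin d → Euc d → ℝ := fun i x =>
    testFn W η t s x * flux (n - d) (α ^ 2 - 1) (fderiv ℝ W) i x with hg
  have hgK : ∀ i, ∀ x ∉ K, g i x = 0 := fun i x hx => by
    simp [hg, testFn, hηK x hx, Real.zero_rpow hs0]
  have hgC : ∀ i, ∀ x, x ≠ 0 → ContDiffAt ℝ 1 (g i) x := by
    intro i x hx
    have h1 : ContDiffAt ℝ 1 (fun y : Euc d => η ‖y‖) x :=
      (hη1.of_le (by simp)).contDiffAt.comp x (contDiffAt_norm ℝ hx)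
    exact ((((hW x hx).of_le (by norm_num)).rpow_const_of_ne (hpos x hx).ne').mul
      (h1.rpow_const_of_le (by norm_num; linarith))).mul (contDiffAt_flux _ _ i hx (hW x hx))
  have hI := fun i => integral_fderiv_eq_zero hK hK0 (hgC i) (hgK i) (EuclideanSpace.single i 1)
  have h0 : ∫ x, ∑ i, fderiv ℝ (g i) x (EuclideanSpace.single i 1) = 0 := by
    rw [integral_finsetSum _ fun i _ => (hI i).1]
    exact Finset.sum_eq_zero fun i _ => (hI i).2
  have hmono : ∫ x, ∑ i, fderiv ℝ (g i) x (EuclideanSpace.single i 1) ≤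
      ∫ x : Euc d, (-(W x ^ (q + t) * η ‖x‖ ^ s * ‖x‖ ^ (n - d))
        - k / 2 * (W x ^ t * cylGradSq α W x * η ‖x‖ ^ s * ‖x‖ ^ (n - d))
        + s ^ 2 / (2 * k) *
          (W x ^ (2 + t) * (α ^ 2 * deriv η ‖x‖ ^ 2) * η ‖x‖ ^ (s - 2) * ‖x‖ ^ (n - d))) := by
    -- off the annulus `K`, which includes the origin, both sides vanish
    refine integral_mono (integrable_finsetSum _ fun i _ => (hI i).1)
      (i12.add (i3.const_mul _)) fun x => ?_
    by_cases hxK : x ∈ K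
    swap
    · have hz : ∀ i, fderiv ℝ (g i) x = 0 := fun i =>
        (hasFDerivAt_zero_off hK.isClosed (hgK i) hxK).fderiv
      simp [hz, hηK x hxK, hηK' x hxK, Real.zero_rpow hs0]
    have hx : x ≠ 0 := fun h => hK0 (h ▸ hxK)
    obtain ⟨D, hD, hDv⟩ := hasFDerivAt_testFn t (by linarith : 1 ≤ s)
      (hη1.differentiable (by simp)) hx (hpos x hx) ((hW x hx).differentiableAt (by norm_num))
    have hgi : ∀ i, fderiv ℝ (g i) x (EuclideanSpace.single i 1) =
        testFn W η t s x * fderiv ℝ (flux (n - d) (α ^ 2 - 1) (fderiv ℝ W) i) x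
          (EuclideanSpace.single i 1)
        + flux (n - d) (α ^ 2 - 1) (fderiv ℝ W) i x * D (EuclideanSpace.single i 1) := by
      intro i
      have hf := ((contDiffAt_flux (n - d) (α ^ 2 - 1) i hx (hW x hx)).differentiableAt
        (by norm_num)).hasFDerivAt
      have := (hD.mul hf).fderiv
      have e : g i = testFn W η t s * flux (n - d) (α ^ 2 - 1) (fderiv ℝ W) i := rfl
      rw [e, this]
      simp
    have hN : 0 ≤ ‖x‖ ^ (n - d) := Real.rpow_nonneg (norm_nonneg _) _
    have hQ : α ^ 2 * rD W x ^ 2 ≤ cylGradSq α W x := by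
      rw [cylGradSq]; nlinarith [sq_nonneg ‖tGrad W x‖]
    have hy := mul_le_mul_of_nonneg_left (young_pointwise (q := q) (e' := deriv η ‖x‖)
      (hpos x hx) (hη4 ‖x‖) hs hk hkt hQ) hN
    simp_rw [hgi, hDv]
    rw [Finset.sum_add_distrib, ← Finset.mul_sum,
      sum_flux_fderiv α n hx (hasFDerivAt_fderiv (hW x hx)), sum_flux_mul α _ W hx, hL x hx, testFn]
    linarith
  rw [h0, integral_add i12 (i3.const_mul _), integral_sub i1n (i2.const_mul _), integral_neg,
    integral_const_mul, integral_const_mul] at hmono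
  simp only [cylIntegral]
  linarith

/-! ### The parameters and the conclusion -/

/-- The identities `α (n - 2) = d - 2 - 2a` and `2α - 2 - 2a = -bp` that make the change of variables
`r ↦ r^α` turn the weighted equation for `u` into `-𝓛w = w^{p-1}`. -/
lemma cyl_param {d : ℕ} {a b : ℝ} (hadm : Admissible d a b)
    (hp : PInCriticalRange d (pCKN d a b)) :
    alphaCKN d a b ≠ 0 ∧
    alphaCKN d a b * (nCKN d a b - 1) = alphaCKN d a b + d - 2 - 2 * a ∧
    2 * alphaCKN d a b - 2 - 2 * a = -(b * pCKN d a b) := by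
  obtain ⟨hab, hac⟩ := hadm
  have hA : 0 < acrit d - a + b ∧ b ≤ a + 1 := by
    rcases hab with ⟨h3, h1, h2⟩ | ⟨h3, h1, h2⟩
    · have : (3 : ℝ) ≤ d := by exact_mod_cast h3
      refine ⟨?_, h2⟩
      rw [acrit]; linarith
    · subst h3
      refine ⟨?_, h2⟩
      rw [acrit]; push_cast; linarith
  obtain ⟨hA, hb⟩ := hA
  have hA' : 0 < (d : ℝ) - 2 + 2 * (b - a) := by rw [acrit] at hA; linarith
  -- `2 < p` forces `b < a + 1`
  have hb' : 0 < 1 + a - b := by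
    have h := hp.1
    rw [pCKN, lt_div_iff₀ hA'] at h
    linarith
  have e : acrit d - a + b = ((d : ℝ) - 2 + 2 * (b - a)) / 2 := by rw [acrit]; ring
  refine ⟨?_, ?_, ?_⟩
  · have : 0 < acrit d - a := by linarith
    unfold alphaCKN
    positivity
  · rw [alphaCKN, nCKN, e, acrit]
    field_simp
    ring
  · rw [alphaCKN, pCKN, e, acrit]
    field_simp
    ring

/-- **Lemma (Caccioppoli-type estimate).** If `u` is a positive solution with cylinder
representation `w`, then for every `t < -1` and `s ≥ max{2, 2(p+t)/(p-2)}` there is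
`C > 0` such that for every nonnegative `η ∈ C_c^∞(0,∞)`:
`∫ w^{p+t} η^s dμ + ∫ w^t |Dw|² η^s dμ ≤ C ∫ w^{2+t} |Dη|² η^{s-2} dμ`,
where `|Dη|² = α² |η'|²`. -/
theorem caccioppoli_estimate (d : ℕ) (a b : ℝ) (u W : Euc d → ℝ)
    (hadm : Admissible d a b)
    (hp : PInCriticalRange d (pCKN d a b))
    (hupos : ∀ x : Euc d, 0 < u x)
    (husol : IsCKNSolution d a b (pCKN d a b) u)
    (hW : IsCylinderRep (alphaCKN d a b) u W) :
    ∀ t : ℝ, t < -1 →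
      ∀ s : ℝ, max 2 (2 * (pCKN d a b + t) / (pCKN d a b - 2)) ≤ s →
        ∃ C : ℝ, 0 < C ∧ ∀ η : ℝ → ℝ, IsCutoff η →
          cylIntegral (nCKN d a b) (fun x => W x ^ (pCKN d a b + t) * η ‖x‖ ^ s) +
              cylIntegral (nCKN d a b) (fun x =>
                W x ^ t * cylGradSq (alphaCKN d a b) W x * η ‖x‖ ^ s) ≤
            C * cylIntegral (nCKN d a b) (fun x =>
              W x ^ (2 + t) * (alphaCKN d a b ^ 2 * deriv η ‖x‖ ^ 2) *
                η ‖x‖ ^ (s - 2)) := by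

  intro t ht s hs
  obtain ⟨hα, hn, hpp⟩ := cyl_param hadm hp
  have hs2 : 2 ≤ s := (le_max_left _ _).trans hs
  have smooth : ∀ f : Euc d → ℝ, ContDiffOn ℝ (⊤ : ℕ∞) f {(0 : Euc d)}ᶜ →
      ∀ x : Euc d, x ≠ 0 → ContDiffAt ℝ 2 f x := fun f hf x hx =>
    (hf.contDiffAt (isOpen_compl_singleton.mem_nhds hx)).of_le 
      (WithTop.coe_le_coe.2 (le_top : (2 : ℕ∞) ≤ ⊤))
  have hWpos : ∀ x : Euc d, x ≠ 0 → 0 < W x := by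
    intro x hx
    obtain ⟨y, hy, rfl⟩ := exists_stretch_eq hα hx
    rw [stretch, ← hW.2 y hy]
    exact hupos y
  have hL : ∀ x : Euc d, x ≠ 0 →
      cylL (alphaCKN d a b) (nCKN d a b) W x = -W x ^ (pCKN d a b - 1) := fun x hx =>
    cylL_of_rep hα hn hpp (smooth u husol.1) husol.2 (smooth W hW.1) hW.2 hx
  obtain ⟨k, hk⟩ : ∃ k : ℝ, k = -(1 + t) := ⟨_, rfl⟩
  have hk0 : 0 < k := by linarith
  refine ⟨(1 + 2 / k) * (s ^ 2 / (2 * k)), by positivity, fun η hη => ?_⟩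
  have hmain := caccioppoli_aux hWpos (smooth W hW.1) hL hk0 (by linarith : 1 + t = -k) hs2 hη
  have hη0 : η 0 = 0 := image_eq_zero_of_notMem_tsupport fun h => by simpa using hη.2.2.1 h
  -- `W 0` is arbitrary, but `η` vanishes at the origin
  have hnn : ∀ (r : ℝ) (G : Euc d → ℝ), (∀ x, 0 ≤ G x) →
      0 ≤ cylIntegral (nCKN d a b) (fun x => W x ^ r * G x * η ‖x‖ ^ s) := by
    intro r G hG
    refine integral_nonneg fun x => ?_
    by_cases hx : x = 0
    · simp [hx, hη0, Real.zero_rpow (by linarith : s ≠ 0)]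
    · have := hWpos x hx
      have := hG x
      have := hη.2.2.2 ‖x‖
      positivity
  have h1 : 0 ≤ cylIntegral (nCKN d a b) (fun x => W x ^ (pCKN d a b + t) * η ‖x‖ ^ s) := by
    simpa using hnn (pCKN d a b + t) (fun _ => 1) fun _ => zero_le_one
  have h2 := hnn t (cylGradSq (alphaCKN d a b) W) fun x => by
    rw [cylGradSq]; positivity
  generalize cylIntegral (nCKN d a b) (fun x => W x ^ (pCKN d a b + t) * η ‖x‖ ^ s) = I1 at *
  generalize cylIntegral (nCKN d a b) (fun x =>
    W x ^ t * cylGradSq (alphaCKN d a b) W x * η ‖x‖ ^ s) = I2 at *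
  have h4 := mul_le_mul_of_nonneg_left hmain (by positivity : 0 ≤ 1 + 2 / k)
  have h5 : (1 + 2 / k) * (I1 + k / 2 * I2) = I1 + I2 + (2 / k * I1 + k / 2 * I2) := by
    field_simp; ring
  have h6 : 0 ≤ 2 / k * I1 + k / 2 * I2 := by positivity
  rw [mul_assoc]
  linarith
end
end

section
/- The radial function 𝒰(x) := (d(p-2)(a_c-a)²/(1+a-b))^{1/(p-2)} (1 + |x|^{(p-2)(a_c-a)})^{-2/(p-2)} is a positive solution of div(|x|^{-2a}∇u) + |x|^{-bp} u^{p-1} = 0 in ℝ^d \ {0}, for a,b satisfying the admissibility conditions. -/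
/-!
The function `𝒰` is radial, `𝒰 x = C (1 + r ^ k) ^ (-m)` with `r = ‖x‖`, `A = a_c - a`,
`k = (p - 2) A`, `m = 2 / (p - 2)`, so that `m k = 2 A`. Hence away from the origin
`|x|^{-2a} ∇𝒰 = g(r) x` with `g(r) = -2 A C r ^ (k - 2 - 2 a) (1 + r ^ k) ^ (-m - 1)`, and the
divergence of a field `g(r) x` is `d g + r g'` (`divg_radial`). Because
`d + k - 2 - 2 a = 2 A + k = (m + 1) k`, the two terms of `d g + r g'` combine
(`radial_identity`) into
`-2 A (2 A + k) C r ^ (k - 2 - 2 a) (1 + r ^ k) ^ (-m - 2)`. Three relations, which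
follow from `parameter_relations`, conclude: `2 A + k = p A`, `k - 2 - 2 a = -b p`, and
`C ^ (p - 2) = 2 p A ^ 2`, the last one since `d (p - 2) / (1 + a - b) = 2 p`.
-/

open Real MeasureTheory Metric
open scoped RealInnerProductSpace

noncomputable section

/-- The gradient of a radial function `φ(‖x‖)` is `φ'(‖x‖) x / ‖x‖`. -/
lemma hasFDerivAt_radial {d : ℕ} {φ : ℝ → ℝ} {φ' : ℝ} {x : Euc d} (hx : x ≠ 0)
    (h : HasDerivAt φ φ' ‖x‖) :
    HasFDerivAt (fun y : Euc d => φ ‖y‖) ((φ' / ‖x‖) • innerSL ℝ x) x := by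
  have hr : ‖x‖ ≠ 0 := norm_ne_zero_iff.mpr hx
  have hn : HasFDerivAt (fun y : Euc d => ‖y‖) ((1 / ‖x‖) • innerSL ℝ x) x := by
    have h1 : HasFDerivAt (fun y : Euc d => √(‖y‖ ^ 2)) _ x :=
      (hasStrictFDerivAt_norm_sq x).hasFDerivAt.sqrt (pow_ne_zero 2 hr)
    simp only [Real.sqrt_sq (norm_nonneg _)] at h1
    refine h1.congr_fderiv (ContinuousLinearMap.ext fun v => ?_)
    simp
    field_simp
  refine (h.comp_hasFDerivAt x hn).congr_fderiv ?_
  rw [smul_smul, mul_one_div]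

lemma gradient_radial {d : ℕ} {φ : ℝ → ℝ} {φ' : ℝ} {x : Euc d} (hx : x ≠ 0)
    (h : HasDerivAt φ φ' ‖x‖) :
    gradient (fun y : Euc d => φ ‖y‖) x = (φ' / ‖x‖) • x := by
  apply HasGradientAt.gradient
  rw [hasGradientAt_iff_hasFDerivAt]
  refine (hasFDerivAt_radial hx h).congr_fderiv (ContinuousLinearMap.ext fun v => ?_)
  simp

lemma divg_radial {d : ℕ} {g : ℝ → ℝ} {g' : ℝ} {x : Euc d} (hx : x ≠ 0)
    (h : HasDerivAt g g' ‖x‖) :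
    divg (fun y : Euc d => g ‖y‖ • y) x = d * g ‖x‖ + ‖x‖ * g' := by
  have hr : ‖x‖ ≠ 0 := norm_ne_zero_iff.mpr hx
  have hF := (hasFDerivAt_radial hx h).smul (hasFDerivAt_id x)
  have hsq : ∑ i, x i * x i = ‖x‖ ^ 2 := by
    rw [EuclideanSpace.norm_sq_eq]
    simp [sq]
  have key : ∀ i : Fin d,
      ⟪fderiv ℝ (fun y : Euc d => g ‖y‖ • y) x (EuclideanSpace.single i 1),
        EuclideanSpace.single i 1⟫ = g ‖x‖ + g' / ‖x‖ * (x i * x i) := by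
    intro i
    have : fderiv ℝ (fun y : Euc d => g ‖y‖ • y) x = _ := hF.fderiv
    rw [this]
    simp [inner_add_left, inner_smul_left, EuclideanSpace.inner_single_right]
    ring
  unfold divg
  simp_rw [key]
  rw [Finset.sum_add_distrib, ← Finset.mul_sum, hsq]
  simp
  field_simp

lemma hasDerivAt_one_add_rpow (k s : ℝ) {r : ℝ} (hr : 0 < r) :
    HasDerivAt (fun t : ℝ => (1 + t ^ k) ^ s)
      (k * r ^ (k - 1) * s * (1 + r ^ k) ^ (s - 1)) r := by
  have hQ : 1 + r ^ k ≠ 0 := by positivity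
  have h1 := (Real.hasDerivAt_rpow_const (p := k) (Or.inl hr.ne')).const_add (1 : ℝ)
  exact h1.rpow_const (Or.inl hQ)

/-- The quantity `d g + r g'` for `g(r) = r ^ e (1 + r ^ k) ^ (-m - 1)`: when
`d + e = (m + 1) k` the terms of order `r ^ k` cancel. -/
lemma radial_identity {d e k m r : ℝ} (hr : 0 < r) (h : d + e = (m + 1) * k) :
    d * (r ^ e * (1 + r ^ k) ^ (-m - 1)) +
      r * (e * r ^ (e - 1) * (1 + r ^ k) ^ (-m - 1) +
        r ^ e * (k * r ^ (k - 1) * (-m - 1) * (1 + r ^ k) ^ (-m - 1 - 1))) =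
      (m + 1) * k * (r ^ e * (1 + r ^ k) ^ (-m - 2)) := by
  have hQ : 0 < 1 + r ^ k := by positivity
  have e1 : (1 + r ^ k) ^ (-m - 1) = (1 + r ^ k) ^ (-m - 2) * (1 + r ^ k) := by
    rw [← Real.rpow_add_one hQ.ne']; congr 1; ring
  have e2 : (-m - 1 - 1 : ℝ) = -m - 2 := by ring
  have e3 : r * r ^ (e - 1) = r ^ e := by
    rw [Real.rpow_sub_one hr.ne']; field_simp
  have e4 : r * r ^ (k - 1) = r ^ k := by
    rw [Real.rpow_sub_one hr.ne']; field_simp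
  rw [e1, e2]
  generalize (1 + r ^ k) ^ (-m - 2) = Q
  linear_combination e * Q * (1 + r ^ k) * e3 + r ^ e * k * (-m - 1) * Q * e4 +
    r ^ e * Q * (1 + r ^ k) * h

lemma parameter_relations {d : ℕ} {a b : ℝ} (hadm : Admissible d a b) (hb : b < a + 1) :
    0 < (d : ℝ) ∧ 2 < pCKN d a b ∧ pCKN d a b * (acrit d - a + b) = d ∧
      (d : ℝ) * (pCKN d a b - 2) / (1 + a - b) = 2 * pCKN d a b := by
  have hd : 0 < (d : ℝ) ∧ 0 < (d : ℝ) - 2 + 2 * (b - a) := by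
    rcases hadm.1 with ⟨h3, h, -⟩ | ⟨rfl, h, -⟩
    · have : (3 : ℝ) ≤ d := by exact_mod_cast h3
      constructor <;> linarith
    · constructor <;> norm_num
      linarith
  obtain ⟨hd0, hD⟩ := hd
  have hb' : 1 + a - b ≠ 0 := by linarith
  refine ⟨hd0, ?_, ?_, ?_⟩
  · rw [pCKN, lt_div_iff₀ hD]; linarith
  · rw [pCKN, acrit, div_mul_eq_mul_div, div_eq_iff hD.ne']; ring
  · rw [pCKN, div_eq_iff hb']
    field_simp
    ring

lemma divg_congr {d : ℕ} {F G : Euc d → Euc d} {x : Euc d}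
    (h : F =ᶠ[nhds x] G) : divg F x = divg G x := by
  unfold divg
  rw [h.fderiv_eq]

/-- **Lemma (the explicit bubble solves the equation).** For admissible `a, b` with
`b < a + 1`, the radial function `𝒰` is a positive solution of
`div(|x|^{-2a} ∇u) + |x|^{-bp} u^{p-1} = 0` in `ℝ^d \ {0}`. -/
theorem UCKN_is_solution (d : ℕ) (a b : ℝ)
    (hadm : Admissible d a b) (hb : b < a + 1) :
    (∀ x : Euc d, x ≠ 0 → 0 < UCKN d a b x) ∧
      IsCKNSolution d a b (pCKN d a b) (UCKN d a b) := by
  obtain ⟨hd0, hp2, hpd, hpC⟩ := parameter_relations hadm hb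
  have hA : 0 < acrit d - a := sub_pos.mpr hadm.2
  have hdA : (d : ℝ) - 2 - 2 * a = 2 * (acrit d - a) := by rw [acrit]; ring
  have hUdef : ∀ x, UCKN d a b x =
      (2 * pCKN d a b * (acrit d - a) ^ 2) ^ (1 / (pCKN d a b - 2)) *
        (1 + ‖x‖ ^ ((pCKN d a b - 2) * (acrit d - a))) ^ (-(2 / (pCKN d a b - 2))) := by
    intro x
    rw [UCKN, ← hpC, neg_div, div_mul_eq_mul_div]
  generalize pCKN d a b = p at *
  generalize acrit d - a = A at *
  have hp : p - 2 ≠ 0 := by linarith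
  obtain ⟨k, hk⟩ : ∃ k, k = (p - 2) * A := ⟨_, rfl⟩
  obtain ⟨m, hm⟩ : ∃ m, m = 2 / (p - 2) := ⟨_, rfl⟩
  obtain ⟨C, hC⟩ : ∃ C, C = (2 * p * A ^ 2) ^ (1 / (p - 2)) := ⟨_, rfl⟩
  have hU : UCKN d a b = fun x => C * (1 + ‖x‖ ^ k) ^ (-m) := by
    funext x; rw [hUdef, hC, hk, hm]
  have hpA : 0 < 2 * p * A ^ 2 := by positivity
  have hC0 : 0 < C := by rw [hC]; positivity
  have hCp : C ^ (p - 1) = 2 * p * A ^ 2 * C := by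
    have : C ^ (p - 2) = 2 * p * A ^ 2 := by
      rw [hC, ← Real.rpow_mul hpA.le, one_div, inv_mul_cancel₀ hp, Real.rpow_one]
    rw [← this, ← Real.rpow_add_one hC0.ne']
    congr 1; ring
  have hmk : m * k = 2 * A := by rw [hm, hk]; field_simp
  have hmp : m * (p - 1) = m + 2 := by rw [hm]; field_simp; ring
  have hQ : ∀ x : Euc d, 0 < 1 + ‖x‖ ^ k := fun x => by positivity
  rw [hU]
  refine ⟨fun x _ => mul_pos hC0 (Real.rpow_pos_of_pos (hQ x) _), ?_, ?_⟩
  · intro x hx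
    have hx : x ≠ 0 := hx
    apply ContDiffAt.contDiffWithinAt
    have h1 : ContDiffAt ℝ (⊤ : ℕ∞) (fun y : Euc d => ‖y‖ ^ k) x :=
      (contDiffAt_norm ℝ hx).rpow_const_of_ne (norm_ne_zero_iff.mpr hx)
    exact contDiffAt_const.mul
      ((contDiffAt_const.add h1).rpow_const_of_ne (hQ x).ne')
  · intro x hx
    have hr : 0 < ‖x‖ := norm_pos_iff.mpr hx
    -- On the punctured space the flux is `g(‖y‖) y`; `x ≠ 0` gives this on a neighbourhood.
    have hflux : (fun y : Euc d => (‖y‖ ^ (-(2 * a)) : ℝ) •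
          gradient (fun x : Euc d => C * (1 + ‖x‖ ^ k) ^ (-m)) y) =ᶠ[nhds x]
        fun y => (-(2 * A * C) * (‖y‖ ^ (-(b * p)) * (1 + ‖y‖ ^ k) ^ (-m - 1))) • y := by
      filter_upwards [isOpen_compl_singleton.mem_nhds hx] with y hy
      have hy0 : y ≠ 0 := hy
      have hs : 0 < ‖y‖ := norm_pos_iff.mpr hy0
      have hφ := (hasDerivAt_one_add_rpow k (-m) hs).const_mul C
      rw [gradient_radial (φ := fun t => C * (1 + t ^ k) ^ (-m)) hy0 hφ, smul_smul]
      congr 1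
      have e : ‖y‖ ^ (-(b * p)) = ‖y‖ ^ (-(2 * a)) * (‖y‖ ^ (k - 1) / ‖y‖) := by
        rw [← Real.rpow_sub_one hs.ne', ← Real.rpow_add hs]
        congr 1
        linear_combination -hdA - hpd - hk
      rw [e]
      linear_combination -(C * ‖y‖ ^ (-(2 * a)) * (‖y‖ ^ (k - 1) / ‖y‖) *
        (1 + ‖y‖ ^ k) ^ (-m - 1)) * hmk
    have hg := ((Real.hasDerivAt_rpow_const (p := -(b * p)) (Or.inl hr.ne')).mul
      (hasDerivAt_one_add_rpow k (-m - 1) hr)).const_mul (-(2 * A * C))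
    rw [divg_congr hflux, divg_radial
      (g := fun t => -(2 * A * C) * (t ^ (-(b * p)) * (1 + t ^ k) ^ (-m - 1))) hx hg]
    have hid := radial_identity (d := d) (e := -(b * p)) (k := k) (m := m) hr
      (by linear_combination -hpd - hk - hmk)
    have hQp : ((1 + ‖x‖ ^ k) ^ (-m)) ^ (p - 1) = (1 + ‖x‖ ^ k) ^ (-m - 2) := by
      rw [← Real.rpow_mul (hQ x).le]
      congr 1
      linear_combination -hmp
    have hmkp : (m + 1) * k = p * A := by linear_combination hmk + hk
    rw [Real.mul_rpow hC0.le (Real.rpow_nonneg (hQ x).le _), hQp, hCp]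
    rw [hmkp] at hid
    linear_combination -(2 * A * C) * hid
end
end
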